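/- arXiv:1804.09449 — 2 statements merged into one kernel-verified Lean document; each statement's English description precedes it below -/
import Mathlib

section
/- Let G be a finite simple cubic graph that is 3-edge-connected, and let e be an edge of G. Then G admits a nowhere-zero Z_2^3-flow θ such that e is rich with respect to θ. -/
open SimpleGraph

/-- A proper edge-coloring: distinct edges of `G` sharing an endpoint get different colors. -/
def IsProperEdgeColoring {V C : Type*} (G : SimpleGraph V) (c : Sym2 V → C) : Prop :=
  ∀ e ∈ G.edgeSet, ∀ f ∈ G.edgeSet, e ≠ f → (∃ v : V, v ∈ e ∧ v ∈ f) → c e ≠ c f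

/-- `S_c(v)`: the set of colors appearing on edges incident to `v`. -/
def colorSet {V C : Type*} (G : SimpleGraph V) (c : Sym2 V → C) (v : V) : Set C :=
  c '' G.incidenceSet v

/-- The edge `uv` is poor: exactly 3 colors appear around its endpoints. -/
def IsPoorAt {V C : Type*} (G : SimpleGraph V) (c : Sym2 V → C) (u v : V) : Prop :=
  (colorSet G c u ∪ colorSet G c v).ncard = 3

/-- The edge `uv` is rich: exactly 5 colors appear around its endpoints. -/
def IsRichAt {V C : Type*} (G : SimpleGraph V) (c : Sym2 V → C) (u v : V) : Prop :=
  (colorSet G c u ∪ colorSet G c v).ncard = 5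

/-- A normal edge-coloring: a proper edge-coloring in which every edge is poor or rich. -/
def IsNormalEdgeColoring {V C : Type*} (G : SimpleGraph V) (c : Sym2 V → C) : Prop :=
  IsProperEdgeColoring G c ∧
    ∀ u v : V, G.Adj u v → IsPoorAt G c u v ∨ IsRichAt G c u v

/-- A nowhere-zero flow with values in an additive group `M` (all elements self-inverse in our
applications): nonzero on every edge, and at every vertex the values on incident edges sum to 0. -/
def IsNowhereZeroFlow {V M : Type*} [AddCommMonoid M] (G : SimpleGraph V)
    (θ : Sym2 V → M) : Prop :=
  (∀ e ∈ G.edgeSet, θ e ≠ 0) ∧ ∀ v : V, ∑ᶠ e ∈ G.incidenceSet v, θ e = 0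

/-- `G` is `k`-edge-connected: connected, and still connected after deleting any set of
fewer than `k` edges. -/
def EdgeConnGe {V : Type*} (G : SimpleGraph V) (k : ℕ) : Prop :=
  G.Connected ∧ ∀ s : Set (Sym2 V), s.ncard < k → (G.deleteEdges s).Connected

/-- `G` is cubic: every vertex has degree 3. -/
def IsCubic {V : Type*} (G : SimpleGraph V) : Prop :=
  ∀ v : V, (G.neighborSet v).ncard = 3

/-- `G` is bridgeless: no edge is a bridge. -/
def Bridgeless {V : Type*} (G : SimpleGraph V) : Prop :=
  ∀ e ∈ G.edgeSet, ¬ G.IsBridge e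

/-!
This is Seymour's argument for the 8-flow theorem, started at the prescribed edge. Write a
`ZMod 2 × M`-flow as a pair `(A, φ)`: the task is to find a mod-2 flow `A` such that some `M`-flow
`φ` vanishes only where `A` does not. Call a pair `(H, A)` completable if, inside the vertex set
`H`, every `M`-valued demand of total zero can be met by such a `φ`. A closed trail with its edge
parities is completable: put a nonzero constant on the chords and route what is left along the
trail. Two disjoint completable sets joined by at least two edges merge, because two nonzero
elements of `M` can be chosen with any prescribed sum once `M` has more than two elements. In a
3-edge-connected graph, the complement of `H` contains a 2-edge-connected piece sending two edges
to `H`, hence a closed trail doing so, and a completable set grows to the whole graph without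
changing `A` at its old vertices.

To make `uv` rich, start from a closed trail of `G - v` through `u` and a second neighbor of `v`,
merged with the vertex `v`. Then `A` vanishes at `v` and is nonzero on the two edges at `u` other
than `uv`, so no color other than that of `uv` occurs at both ends.
-/

open Finset

section ClosedTrail

variable {V : Type*} {G : SimpleGraph V} {x y z : V}

theorem exists_isTrail_subset_closedTrail {w : G.Walk x x} (hw : w.IsTrail) {r z : V}
    (hr : r ∈ w.support) (hz : z ∈ w.support) :
    ∃ c : G.Walk r z, c.IsTrail ∧ x ∈ c.support ∧ c.edges ⊆ w.edges := by
  classical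
  have hrz : r ∈ (w.rotate z hz).support := (w.mem_support_rotate_iff z hz).2 hr
  have hedges : (w.rotate z hz).edges ⊆ w.edges := (w.rotate_edges z hz).perm.subset
  have htrail : (w.rotate z hz).IsTrail := hw.rotate hz
  have hx : x ∈ (w.rotate z hz).support :=
    (w.mem_support_rotate_iff z hz).2 w.start_mem_support
  rw [← Walk.take_spec _ hrz, Walk.mem_support_append_iff] at hx
  rcases hx with hx | hx
  · refine ⟨((w.rotate z hz).takeUntil r hrz).reverse, (htrail.takeUntil hrz).reverse,
      by simpa using hx, ?_⟩
    simpa using List.Subset.trans (Walk.edges_takeUntil_subset_edges _ hrz) hedges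
  · exact ⟨_, htrail.dropUntil hrz, hx,
      List.Subset.trans (Walk.edges_dropUntil_subset_edges _ hrz) hedges⟩

theorem exists_walk_inter_support_eq {w : G.Walk x x} (hz : z ∈ w.support)
    (hzy : G.IsEdgeReachable 2 y z) :
    ∃ r ∈ w.support, ∃ q : G.Walk y r,
      s(y, z) ∉ q.edges ∧ ∀ t ∈ q.support, t ∈ w.support → t = r := by
  classical
  obtain ⟨q, hq⟩ := reachable_deleteEdges_iff_exists_walk.1 (isEdgeReachable_two.1 hzy s(y, z))
  obtain ⟨r, hr, hrq, hfirst⟩ := q.exists_mem_support_forall_mem_support_imp_eq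
    w.support.toFinset ⟨z, by simp [hz]⟩
  exact ⟨r, by simpa using hr, q.takeUntil r hrq,
    fun h => hq (q.edges_takeUntil_subset_edges hrq h),
    fun t htq htw => hfirst t (by simpa using htw) htq⟩

theorem edges_disjoint_of_inter_support {a b c d r : V} {q : G.Walk a b} {w : G.Walk c d}
    (h : ∀ t ∈ q.support, t ∈ w.support → t = r) : q.edges.Disjoint w.edges := by
  intro e heq hew
  induction e with
  | h s t =>
    have hs := h s (q.fst_mem_support_of_mem_edges heq) (w.fst_mem_support_of_mem_edges hew)
    have ht := h t (q.snd_mem_support_of_mem_edges heq) (w.snd_mem_support_of_mem_edges hew)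
    exact (w.adj_of_mem_edges hew).ne (hs.trans ht.symm)

theorem exists_closedTrail_mem_support_of_adj {w : G.Walk x x} (hw : w.IsTrail)
    (hz : z ∈ w.support) (hadj : G.Adj z y) (hzy : G.IsEdgeReachable 2 y z) :
    ∃ w' : G.Walk x x, w'.IsTrail ∧ y ∈ w'.support := by
  classical
  by_cases hy : y ∈ w.support
  · exact ⟨w, hw, hy⟩
  obtain ⟨r, hr, q, hyz, hq⟩ := exists_walk_inter_support_eq hz hzy
  obtain ⟨c, hc, hxc, hcw⟩ := exists_isTrail_subset_closedTrail hw hr hz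
  have hqw : q.edges.Disjoint w.edges := edges_disjoint_of_inter_support hq
  have htrail : (Walk.cons hadj (q.bypass.append c)).IsTrail := by
    rw [Walk.isTrail_cons, Walk.isTrail_append, Walk.edges_append, List.mem_append, Sym2.eq_swap]
    refine ⟨⟨q.bypass_isPath.isTrail, hc, fun e he hec => ?_⟩, not_or.2 ⟨?_, ?_⟩⟩
    · exact hqw (q.edges_bypass_subset_edges he) (hcw hec)
    · exact fun h => hyz (q.edges_bypass_subset_edges h)
    · exact fun h => hy (w.fst_mem_support_of_mem_edges (hcw h))
  have hx : x ∈ (Walk.cons hadj (q.bypass.append c)).support := by simp [hxc]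
  exact ⟨_, htrail.rotate hx, by simp [Walk.mem_support_rotate_iff]⟩

theorem exists_closedTrail_mem_support (h : G.IsEdgeReachable 2 x y) :
    ∃ w : G.Walk x x, w.IsTrail ∧ y ∈ w.support := by
  classical
  obtain ⟨p, hp⟩ := (h.symm.reachable two_ne_zero).exists_isPath
  replace hp := hp.isTrail
  replace h := h.symm
  induction p with
  | nil => exact ⟨.nil, .nil, by simp⟩
  | @cons y z x hyz p ih =>
    have hzx : G.IsEdgeReachable 2 z x :=
      hp.isEdgeReachable_two_of_isEdgeReachable_two h (by simp) (by simp)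
    obtain ⟨w, hw, hz⟩ := ih hp.of_cons hzx
    exact exists_closedTrail_mem_support_of_adj hw hz hyz.symm (h.trans hzx.symm)

theorem exists_closedTrail_support_subset_of_induce {X : Set V}
    (hX : (G.induce X).IsEdgeConnected 2) (x y : X) :
    ∃ w : G.Walk x.1 x.1, w.IsTrail ∧ y.1 ∈ w.support ∧ ∀ p ∈ w.support, p ∈ X := by
  obtain ⟨w, hw, hy⟩ := exists_closedTrail_mem_support (hX x y)
  let f : G.induce X ↪g G := Embedding.induce X
  have hsupport : (w.map f.toHom).support = w.support.map Subtype.val := w.support_map f.toHom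
  refine ⟨w.map f.toHom, (Walk.isTrail_map_iff_of_injective f.injective).2 hw,
    hsupport ▸ List.mem_map_of_mem hy, fun p hp => ?_⟩
  obtain ⟨q, -, rfl⟩ := List.mem_map.1 (hsupport ▸ hp)
  exact q.2

end ClosedTrail

section EdgeCut

variable {V : Type*} {G : SimpleGraph V} [DecidableRel G.Adj]

theorem card_interedges_comm (A B : Finset V) :
    #(G.interedges A B) = #(G.interedges B A) :=
  have : Std.Symm G.Adj := ⟨fun _ _ => Adj.symm⟩
  Rel.card_interedges_comm A B

theorem card_interedges_induce {X : Finset V} (A B : Finset X) :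
    #((G.induce (X : Set V)).interedges A B) =
      #(G.interedges (A.map (.subtype _)) (B.map (.subtype _))) := by
  rw [← card_map ((Function.Embedding.subtype _).prodMap (.subtype _))]
  congr 1
  ext ⟨a, b⟩
  simp [mem_interedges_iff]

theorem disjoint_sym2 {H K : Finset V} (h : Disjoint H K) : Disjoint H.sym2 K.sym2 := by
  refine disjoint_left.2 fun e => ?_
  induction e with
  | h x y => simpa using fun hx _ hx' => absurd hx' (disjoint_left.1 h hx)

variable [DecidableEq V]

variable (G) in
/-- The edges of `G` between `A` and `B`. Mathlib's `interedges` consists of ordered pairs instead,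
which for disjoint `A` and `B` is only a change of encoding. -/
def crossEdges (A B : Finset V) : Finset (Sym2 V) :=
  (G.interedges A B).image Sym2.mk.uncurry

theorem mem_crossEdges {A B : Finset V} {e : Sym2 V} :
    e ∈ crossEdges G A B ↔ ∃ a ∈ A, ∃ b ∈ B, G.Adj a b ∧ s(a, b) = e := by
  simp [crossEdges, mem_interedges_iff, and_assoc]

theorem crossEdges_comm (A B : Finset V) : crossEdges G A B = crossEdges G B A := by
  ext e
  simp only [mem_crossEdges]
  grind [Sym2.eq_swap, Adj.symm]

theorem mem_sym2_or_mem_crossEdges {H K : Finset V} {e : Sym2 V}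
    (he : e ∈ G.edgeSet) (h : e ∈ (H ∪ K).sym2) :
    e ∈ H.sym2 ∨ e ∈ K.sym2 ∨ e ∈ crossEdges G H K := by
  induction e with
  | h x y =>
    simp only [mk_mem_sym2_iff, mem_union, mem_crossEdges] at *
    by_cases hx : x ∈ H <;> by_cases hy : y ∈ H
    · exact .inl ⟨hx, hy⟩
    · exact .inr (.inr ⟨x, hx, y, h.2.resolve_left hy, he, rfl⟩)
    · exact .inr (.inr ⟨y, hy, x, h.1.resolve_left hx, he.symm, Sym2.eq_swap⟩)
    · exact .inr (.inl ⟨h.1.resolve_left hx, h.2.resolve_left hy⟩)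

theorem crossEdges_subset_sym2 {H K : Finset V} : crossEdges G H K ⊆ (H ∪ K).sym2 := by
  intro e he
  obtain ⟨a, ha, b, hb, -, rfl⟩ := mem_crossEdges.1 he
  simp [ha, hb]

theorem disjoint_sym2_crossEdges {H K : Finset V} (h : Disjoint H K) :
    Disjoint H.sym2 (crossEdges G H K) := by
  refine disjoint_right.2 fun e he heH => ?_
  obtain ⟨a, -, b, hb, -, rfl⟩ := mem_crossEdges.1 he
  exact disjoint_right.1 h hb (mk_mem_sym2_iff.1 heH).2

theorem card_crossEdges {A B : Finset V} (h : Disjoint A B) :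
    #(crossEdges G A B) = #(G.interedges A B) := by
  refine card_image_of_injOn ?_
  rintro ⟨a, b⟩ hab ⟨c, d⟩ hcd heq
  rw [mem_coe, mk_mem_interedges_iff] at hab hcd
  rcases Sym2.eq_iff.1 heq with ⟨rfl, rfl⟩ | ⟨rfl, rfl⟩
  · rfl
  · exact absurd hcd.2.1 (disjoint_left.1 h hab.1)

theorem isEdgeConnected_iff_le_card_interedges [Fintype V] {k : ℕ} :
    G.IsEdgeConnected k ↔
      ∀ A : Finset V, A.Nonempty → Aᶜ.Nonempty → k ≤ #(G.interedges A Aᶜ) := by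
  have hcompl (A : Finset V) : Disjoint A Aᶜ := disjoint_compl_right
  simp only [← card_crossEdges (hcompl _)]
  constructor
  · rintro hG A ⟨a, ha⟩ ⟨b, hb⟩
    by_contra! hcut
    obtain ⟨w⟩ := hG a b (s := crossEdges G A Aᶜ) (by simpa using hcut)
    obtain ⟨d, -, hd₁, hd₂⟩ := w.exists_boundary_dart A ha (mem_compl.1 hb)
    obtain ⟨hadj, hd⟩ := deleteEdges_adj.1 d.adj
    exact hd (mem_crossEdges.2 ⟨d.fst, hd₁, d.snd, mem_compl.2 hd₂, hadj, rfl⟩)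
  · intro hcut u v s hs
    by_contra huv
    classical
    let A : Finset V := {z | (G.deleteEdges s).Reachable u z}
    have hsub : (crossEdges G A Aᶜ : Set (Sym2 V)) ⊆ s := fun e he => by
      obtain ⟨a, ha, b, hb, hab, rfl⟩ := mem_crossEdges.1 he
      by_contra hs
      simp only [A, mem_compl, mem_filter_univ] at ha hb
      exact hb (ha.trans (deleteEdges_adj.2 ⟨hab, hs⟩).reachable)
    have hcard : #(crossEdges G A Aᶜ) < k := by
      simpa using (Set.encard_le_encard hsub).trans_lt hs
    exact (hcut A ⟨u, by simp [A]⟩ ⟨v, by simpa [A] using huv⟩).not_gt hcard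

theorem isEdgeConnected_induce_of_le_card_interedges {X : Finset V} {k : ℕ}
    (hX : ∀ A ⊆ X, A.Nonempty → (X \ A).Nonempty → k ≤ #(G.interedges A (X \ A))) :
    (G.induce (X : Set V)).IsEdgeConnected k := by
  refine isEdgeConnected_iff_le_card_interedges.2 fun A hA hAc => ?_
  let f : (X : Set V) ↪ V := .subtype _
  have hcompl : Aᶜ.map f = X \ A.map f := by
    ext v
    by_cases hv : v ∈ X <;> simp [f, hv]
  rw [card_interedges_induce]
  change k ≤ #(G.interedges (A.map f) (Aᶜ.map f))
  rw [hcompl]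
  exact hX _ (map_subtype_subset A) (hA.map ..) (hcompl ▸ hAc.map ..)

theorem card_interedges_union_right (A : Finset V) {B C : Finset V} (h : Disjoint B C) :
    #(G.interedges A (B ∪ C)) = #(G.interedges A B) + #(G.interedges A C) := by
  rw [← card_union_of_disjoint (G.interedges_disjoint_right A h)]
  congr 1
  grind [mem_interedges_iff]

theorem card_interedges_union_left {A B : Finset V} (h : Disjoint A B) (C : Finset V) :
    #(G.interedges (A ∪ B) C) = #(G.interedges A C) + #(G.interedges B C) := by
  simp only [card_interedges_comm _ C, card_interedges_union_right C h]

theorem card_interedges_sdiff_add_card_interedges_sdiff {A X Y : Finset V} (hAX : A ⊆ X)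
    (hXY : X ⊆ Y) :
    #(G.interedges A (Y \ A)) + #(G.interedges (X \ A) (Y \ (X \ A))) =
      2 * #(G.interedges A (X \ A)) + #(G.interedges X (Y \ X)) := by
  have hA : Y \ A = (X \ A) ∪ (Y \ X) := by grind
  have hXA : Y \ (X \ A) = A ∪ (Y \ X) := by grind
  have hX : #(G.interedges X (Y \ X)) =
      #(G.interedges A (Y \ X)) + #(G.interedges (X \ A) (Y \ X)) := by
    rw [← card_interedges_union_left disjoint_sdiff, union_sdiff_of_subset hAX]
  have hdisj : Disjoint X (Y \ X) := disjoint_sdiff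
  rw [hX, hA, hXA, card_interedges_union_right _ (hdisj.mono_left sdiff_subset),
    card_interedges_union_right _ (hdisj.mono_left hAX), card_interedges_comm (X \ A) A]
  ring

theorem exists_isEdgeConnected_two_induce {Y : Finset V} (hY : Y.Nonempty) :
    ∃ X ⊆ Y, X.Nonempty ∧ #(G.interedges X (Y \ X)) ≤ 1 ∧
      (G.induce (X : Set V)).IsEdgeConnected 2 := by
  obtain ⟨X, -, hmin⟩ := exists_minimal_le_of_wellFoundedLT
    (fun X => X ⊆ Y ∧ X.Nonempty ∧ #(G.interedges X (Y \ X)) ≤ 1) Y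
    ⟨subset_rfl, hY, by simp [interedges_def]⟩
  obtain ⟨hXY, hX, hcut⟩ := hmin.prop
  refine ⟨X, hXY, hX, hcut, isEdgeConnected_induce_of_le_card_interedges fun A hAX hA hXA => ?_⟩
  by_contra! hlt
  have hsum := card_interedges_sdiff_add_card_interedges_sdiff (G := G) hAX hXY
  have hproper : ∀ B ⊂ X, B.Nonempty → 2 ≤ #(G.interedges B (Y \ B)) := fun B hB hBne => by
    by_contra! hBcut
    exact hmin.not_prop_of_lt hB ⟨hB.subset.trans hXY, hBne, by lia⟩
  have hAcut := hproper A (hAX.ssubset_of_ne (by grind)) hA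
  have hXAcut := hproper (X \ A) (sdiff_ssubset hAX hA) hXA
  lia

theorem card_interedges_singleton_compl [Fintype V] (v : V) :
    #(G.interedges {v} {v}ᶜ) = G.degree v := by
  have h : G.interedges {v} {v}ᶜ =
      (G.neighborFinset v).map ⟨Prod.mk v, Prod.mk_right_injective v⟩ := by
    ext ⟨a, b⟩
    simp only [mk_mem_interedges_iff, mem_singleton, mem_compl, mem_map, mem_neighborFinset,
      Function.Embedding.coeFn_mk, Prod.mk.injEq, exists_eq_right_right]
    grind [Adj.ne]
  rw [h, card_map, card_neighborFinset_eq_degree]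

theorem isEdgeConnected_induce_compl_singleton [Fintype V] {k : ℕ} (hG : G.IsEdgeConnected k)
    {v : V} (hv : G.degree v ≤ k) :
    (G.induce (({v}ᶜ : Finset V) : Set V)).IsEdgeConnected ((k + 1) / 2) := by
  refine isEdgeConnected_induce_of_le_card_interedges fun A hA hAne hAcne => ?_
  have hle := isEdgeConnected_iff_le_card_interedges.1 hG
  have hsum := card_interedges_sdiff_add_card_interedges_sdiff (G := G) hA (subset_univ {v}ᶜ)
  simp only [← compl_eq_univ_sdiff, compl_compl] at hsum
  rw [card_interedges_comm _ {v}, card_interedges_singleton_compl] at hsum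
  have hAcut := hle A hAne (hAcne.mono fun _ h => mem_compl.2 (mem_sdiff.1 h).2)
  have hAccut := hle ({v}ᶜ \ A) hAcne (hAne.mono fun _ h => by simp [h])
  lia

end EdgeCut

section Boundary

variable {V M : Type*} [Finite V] [AddCommMonoid M] (G : SimpleGraph V)

/-- The boundary `v ↦ ∑ θ e` over the edges `e` at `v`. Non-edges are ignored, so that `θ` is a
flow exactly when its boundary vanishes. -/
noncomputable def boundary : (Sym2 V → M) →+ (V → M) where
  toFun θ v := ∑ᶠ e ∈ G.incidenceSet v, θ e
  map_zero' := by ext; simp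
  map_add' θ ψ := by ext v; exact finsum_mem_add_distrib (Set.toFinite _)

theorem boundary_apply (θ : Sym2 V → M) (v : V) :
    boundary G θ v = ∑ᶠ e ∈ G.incidenceSet v, θ e := rfl

variable {G}

theorem support_boundary_subset {θ : Sym2 V → M} {H : Finset V}
    (hθ : θ.support ⊆ H.sym2) : (boundary G θ).support ⊆ H := by
  intro v hv
  by_contra hvH
  refine hv (finsum_mem_of_eqOn_zero fun e he => ?_)
  by_contra hne
  exact hvH (mem_sym2_iff.1 (hθ hne) v he.2)

variable [DecidableEq V]

theorem boundary_single_apply (e : Sym2 V) (m : M) (v : V) [Decidable (e ∈ G.incidenceSet v)] :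
    boundary G (Pi.single e m) v = if e ∈ G.incidenceSet v then m else 0 := by
  rw [boundary_apply, finsum_mem_def, finsum_eq_single _ e]
  · simp [Set.indicator_apply]
  · intro f hf
    simp [hf]

theorem boundary_single {x y : V} (h : G.Adj x y) (m : M) :
    boundary G (Pi.single s(x, y) m) = Pi.single x m + Pi.single y m := by
  classical
  ext v
  rw [boundary_single_apply, Pi.add_apply, Pi.single_apply, Pi.single_apply]
  simp only [mk'_mem_incidenceSet_iff, h, true_and]
  have := h.ne
  grind

theorem boundary_single_of_notMem {e : Sym2 V} (he : e ∉ G.edgeSet) (m : M) :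
    boundary G (Pi.single e m) = 0 := by
  classical
  ext v
  exact (boundary_single_apply e m v).trans (if_neg fun h => he h.1)

theorem sum_boundary_eq_sum_crossEdges [DecidableRel G.Adj] {H K : Finset V}
    (hHK : Disjoint H K) {θ : Sym2 V → M} (hθ : θ.support ⊆ crossEdges G H K) :
    ∑ v ∈ H, boundary G θ v = ∑ e ∈ crossEdges G H K, θ e := by
  have hsingle : ∑ e ∈ crossEdges G H K, Pi.single e (θ e) = θ := by
    ext e
    rw [Finset.sum_apply, sum_pi_single]
    exact ite_eq_left_iff.2 fun he => (Function.notMem_support.1 fun h => he (hθ h)).symm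
  have hcross : ∀ e ∈ crossEdges G H K, ∑ v ∈ H, boundary G (Pi.single e (θ e)) v = θ e := by
    intro e he
    obtain ⟨a, ha, b, hb, hab, rfl⟩ := mem_crossEdges.1 he
    simp [boundary_single hab, sum_add_distrib, sum_pi_single', ha, disjoint_right.1 hHK hb]
  calc ∑ v ∈ H, boundary G θ v
      = ∑ v ∈ H, ∑ e ∈ crossEdges G H K, boundary G (Pi.single e (θ e)) v := by
        conv_lhs => rw [← hsingle, map_sum]
        simp only [Finset.sum_apply]
    _ = ∑ e ∈ crossEdges G H K, ∑ v ∈ H, boundary G (Pi.single e (θ e)) v := sum_comm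
    _ = ∑ e ∈ crossEdges G H K, θ e := sum_congr rfl hcross

end Boundary

section ModTwo

variable {V M : Type*} [AddCommGroup M] [Module (ZMod 2) M] {G : SimpleGraph V}

theorem sum_boundary [Fintype V] (θ : Sym2 V → M) : ∑ v, boundary G θ v = 0 := by
  classical
  have hsingle : ∀ e, ∑ v, boundary G (Pi.single e (θ e)) v = 0 := by
    intro e
    by_cases he : e ∈ G.edgeSet
    · induction e with
      | h x y => simp [boundary_single he, sum_add_distrib, ZModModule.add_self]
    · simp [boundary_single_of_notMem he]
  rw [← univ_sum_single θ, map_sum]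
  simp only [Finset.sum_apply]
  rw [sum_comm]
  exact sum_eq_zero fun e _ => hsingle e

theorem exists_boundary_eq_of_support_subset_walk [Fintype V] {x y : V} (w : G.Walk x y)
    {d : V → M} (hd : ∀ v, d v ≠ 0 → v ∈ w.support) (hsum : ∑ v, d v = 0) :
    ∃ φ : Sym2 V → M, (∀ e, φ e ≠ 0 → e ∈ w.edges) ∧ boundary G φ = d := by
  classical
  induction w generalizing d with
  | @nil x =>
    have hdx : ∀ v ≠ x, d v = 0 := fun v hv => by_contra fun h => hv (by simpa using hd v h)
    refine ⟨0, by simp, ?_⟩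
    rw [Fintype.sum_eq_single x hdx] at hsum
    ext v
    by_cases hv : v = x <;> simp [hv, hsum, hdx]
  | @cons x z y h p ih =>
    let step : Sym2 V → M := Pi.single s(x, z) (d x)
    have hstep : boundary G step = Pi.single x (d x) + Pi.single z (d x) := boundary_single h _
    have hrest : ∀ v, (d - boundary G step) v ≠ 0 → v ∈ p.support := by
      intro v hv
      have hvx : v ≠ x := by
        rintro rfl
        simp [hstep, h.ne] at hv
      by_cases hvz : v = z
      · simp [hvz]
      · simpa [hvx] using hd v (by simpa [hstep, hvx, hvz] using hv)
    obtain ⟨φ, hφ, hφd⟩ := ih hrest (by simp [sum_boundary, hsum])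
    refine ⟨φ + step, fun e he => ?_, by rw [map_add, hφd, sub_add_cancel]⟩
    by_cases hφe : φ e = 0
    · have hstep_ne : step e ≠ 0 := by simpa [hφe] using he
      simp [show e = s(x, z) by by_contra hne; exact hstep_ne (Pi.single_eq_of_ne hne _)]
    · exact List.mem_cons_of_mem _ (hφ e hφe)

end ModTwo

section Parity

variable {V : Type*} {G : SimpleGraph V} [DecidableEq V] {x y : V}

/-- The number of times a walk traverses an edge, modulo 2. On a closed walk this is a flow. -/
def edgeParity (w : G.Walk x y) (e : Sym2 V) : ZMod 2 := w.edges.count e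

theorem boundary_edgeParity [Finite V] (w : G.Walk x y) :
    boundary G (edgeParity w) = Pi.single x 1 + Pi.single y 1 := by
  induction w with
  | nil => ext; simp [boundary_apply, edgeParity, CharTwo.add_self_eq_zero]
  | @cons x z y h p ih =>
    have hcons : edgeParity (.cons h p) = Pi.single s(x, z) 1 + edgeParity p := by
      ext e
      by_cases he : e = s(x, z)
      · simp [edgeParity, he, add_comm]
      · simp [edgeParity, he, Ne.symm he]
    rw [hcons, map_add, boundary_single h, ih, add_assoc, ← add_assoc (Pi.single z 1),
      ZModModule.add_self, zero_add]

theorem edgeParity_of_notMem {w : G.Walk x y} {e : Sym2 V} (he : e ∉ w.edges) :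
    edgeParity w e = 0 := by
  simp [edgeParity, List.count_eq_zero_of_not_mem he]

theorem edgeParity_of_mem {w : G.Walk x y} (hw : w.IsTrail) {e : Sym2 V} (he : e ∈ w.edges) :
    edgeParity w e = 1 := by
  simp [edgeParity, List.count_eq_one_of_mem hw.edges_nodup he]

end Parity

section Completable

variable {V M : Type*} [AddCommGroup M]

theorem exists_ne_zero_sum_eq {ι : Type*} (hM : 2 < ENat.card M) {S : Finset ι} (hS : 1 < #S)
    (s : M) : ∃ g : ι → M, (∀ i, g i ≠ 0) ∧ ∑ i ∈ S, g i = s := by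
  classical
  have exists_ne_ne : ∀ t : M, ∃ a, a ≠ 0 ∧ a ≠ t := by
    by_contra! ⟨t, ht⟩
    have hcover : Set.univ ⊆ ({0, t} : Set M) := fun a _ => or_iff_not_imp_left.2 (ht a)
    have hpair : ({0, t} : Set M).encard ≤ 2 := by
      simpa [one_add_one_eq_two] using Set.encard_insert_le {t} 0
    exact (Set.encard_univ M ▸ hM).not_ge ((Set.encard_mono hcover).trans hpair)
  obtain ⟨i, hi, j, hj, hij⟩ := one_lt_card.1 hS
  obtain ⟨m, hm, -⟩ := exists_ne_ne 0
  let t := s - ∑ _k ∈ (S.erase i).erase j, m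
  obtain ⟨a, ha, hat⟩ := exists_ne_ne t
  refine ⟨fun k => if k = i then a else if k = j then t - a else m, fun k => ?_, ?_⟩
  · have : t - a ≠ 0 := sub_ne_zero.2 hat.symm
    grind
  · have hrest : ∀ k ∈ (S.erase i).erase j,
        (if k = i then a else if k = j then t - a else m) = m := by grind
    rw [← add_sum_erase S _ hi, ← add_sum_erase _ _ (mem_erase.2 ⟨hij.symm, hj⟩),
      sum_congr rfl hrest, if_pos rfl, if_neg hij.symm, if_pos rfl]
    grind

theorem exists_support_eq_crossEdges_sum_boundary_eq
    [Finite V] [DecidableEq V] {G : SimpleGraph V} [DecidableRel G.Adj] (hM : 2 < ENat.card M)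
    {H K : Finset V} (hHK : Disjoint H K) (hcard : 2 ≤ #(G.interedges H K)) (s : M) :
    ∃ c : Sym2 V → M, c.support = crossEdges G H K ∧ ∑ v ∈ H, boundary G c v = s := by
  obtain ⟨g, hg, hgs⟩ := exists_ne_zero_sum_eq hM (S := crossEdges G H K)
    (by rwa [card_crossEdges hHK]) s
  have hsupp : ((crossEdges G H K : Set (Sym2 V)).indicator g).support = crossEdges G H K := by
    rw [Set.support_indicator, Function.support_eq_univ hg, Set.inter_univ]
  refine ⟨_, hsupp, ?_⟩
  rw [sum_boundary_eq_sum_crossEdges hHK hsupp.subset, ← hgs]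
  exact sum_congr rfl fun e he => Set.indicator_of_mem he g

variable [Fintype V] [Module (ZMod 2) M] {G : SimpleGraph V}

variable (M G) in
/-- A mod-2 flow `A` inside the vertex set `H` such that every `M`-valued demand on `H` of total
zero is the boundary of a function on the edges inside `H` vanishing only where `A` does not. With
demand `0`, the pair is then a nowhere-zero `ZMod 2 × M`-flow on the edges inside `H`. -/
structure IsCompletable (H : Finset V) (A : Sym2 V → ZMod 2) : Prop where
  support_subset : A.support ⊆ H.sym2
  boundary_eq_zero : boundary G A = 0
  exists_boundary_eq : ∀ d : V → M, d.support ⊆ H → ∑ v, d v = 0 →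
    ∃ φ : Sym2 V → M, φ.support ⊆ H.sym2 ∧ boundary G φ = d ∧
      ∀ e ∈ G.edgeSet, e ∈ H.sym2 → A e = 0 → φ e ≠ 0

variable [DecidableEq V]

theorem isCompletable_of_closedTrail [Nontrivial M] {x : V} {w : G.Walk x x} (hw : w.IsTrail) :
    IsCompletable M G w.support.toFinset (edgeParity w) := by
  have hedges : ∀ e ∈ w.edges, e ∈ w.support.toFinset.sym2 := fun e he =>
    mem_sym2_iff.2 fun v hv => List.mem_toFinset.2 (Walk.mem_support_of_mem_edges he hv)
  have mem_edges : ∀ e, edgeParity w e ≠ 0 → e ∈ w.edges := fun e he =>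
    by_contra fun h => he (edgeParity_of_notMem h)
  refine ⟨fun e he => hedges e (mem_edges e he), ?_, fun d hd hsum => ?_⟩
  · rw [boundary_edgeParity, ZModModule.add_self]
  obtain ⟨m, hm⟩ := exists_ne (0 : M)
  let chords : Sym2 V → M :=
    {e | e ∈ w.support.toFinset.sym2 ∧ e ∉ w.edges}.indicator fun _ => m
  have hchords : chords.support ⊆ w.support.toFinset.sym2 :=
    Set.support_indicator_subset.trans fun e he => he.1
  obtain ⟨φ, hφ, hφd⟩ := exists_boundary_eq_of_support_subset_walk w (d := d - boundary G chords)
    (fun v hv => List.mem_toFinset.1 <|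
      (Function.support_sub _ _).trans (Set.union_subset hd (support_boundary_subset hchords)) hv)
    (by simp [sum_boundary, hsum])
  refine ⟨φ + chords, (Function.support_add _ _).trans <|
    Set.union_subset (fun e he => hedges e (hφ e he)) hchords,
    by rw [map_add, hφd, sub_add_cancel], fun e _ he hA => ?_⟩
  have hew : e ∉ w.edges := fun h => by simp [edgeParity_of_mem hw h] at hA
  have hφe : φ e = 0 := by_contra fun h => hew (hφ e h)
  have hchord : chords e = m := if_pos ⟨he, hew⟩
  simpa [hφe, hchord] using hm

theorem exists_support_eq_crossEdges_split [DecidableRel G.Adj] (hM : 2 < ENat.card M)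
    {H K : Finset V} (hHK : Disjoint H K) (hcard : 2 ≤ #(G.interedges H K)) {d : V → M}
    (hd : d.support ⊆ (H ∪ K : Finset V)) (hsum : ∑ v, d v = 0) :
    ∃ (c : Sym2 V → M) (dH dK : V → M), c.support = crossEdges G H K ∧
      dH.support ⊆ H ∧ dK.support ⊆ K ∧ ∑ v, dH v = 0 ∧ ∑ v, dK v = 0 ∧
      dH + dK + boundary G c = d := by
  obtain ⟨c, hc, hcH⟩ :=
    exists_support_eq_crossEdges_sum_boundary_eq hM hHK hcard (∑ v ∈ H, d v)
  have hcsub : c.support ⊆ (H ∪ K).sym2 := hc.subset.trans (mod_cast crossEdges_subset_sym2)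
  let r := d - boundary G c
  have hr : r.support ⊆ (H : Set V) ∪ K := by
    rw [← coe_union]
    exact (Function.support_sub _ _).trans (Set.union_subset hd (support_boundary_subset hcsub))
  have hsplit : (H : Set V).indicator r + (K : Set V).indicator r = r :=
    (Set.indicator_union_of_disjoint (disjoint_coe.2 hHK) r).symm.trans (Set.indicator_eq_self.2 hr)
  have hrH : ∑ v, (H : Set V).indicator r v = 0 := by
    simp [r, Set.indicator_apply, sum_ite_mem, hcH]
  have hrK : ∑ v, (K : Set V).indicator r v = 0 := by
    have hrsum : ∑ v, r v = 0 := by simp [r, hsum, sum_boundary]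
    rw [← hsplit] at hrsum
    simpa only [Pi.add_apply, sum_add_distrib, hrH, zero_add] using hrsum
  exact ⟨c, _, _, hc, Set.support_indicator_subset, Set.support_indicator_subset, hrH, hrK,
    by rw [hsplit, sub_add_cancel]⟩

theorem IsCompletable.union [DecidableRel G.Adj] (hM : 2 < ENat.card M) {H K : Finset V}
    {A B : Sym2 V → ZMod 2} (hA : IsCompletable M G H A) (hB : IsCompletable M G K B)
    (hHK : Disjoint H K) (hcard : 2 ≤ #(G.interedges H K)) :
    IsCompletable M G (H ∪ K) (A + B) := by
  have hH : (H.sym2 : Set (Sym2 V)) ⊆ (H ∪ K).sym2 := mod_cast sym2_mono subset_union_left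
  have hK : (K.sym2 : Set (Sym2 V)) ⊆ (H ∪ K).sym2 := mod_cast sym2_mono subset_union_right
  obtain ⟨hAsupp, hAflow, hAexists⟩ := hA
  obtain ⟨hBsupp, hBflow, hBexists⟩ := hB
  refine ⟨(Function.support_add _ _).trans <|
      Set.union_subset (hAsupp.trans hH) (hBsupp.trans hK),
    by rw [map_add, hAflow, hBflow, add_zero], fun d hd hsum => ?_⟩
  obtain ⟨c, dH, dK, hc, hdH, hdK, hsumH, hsumK, rfl⟩ :=
    exists_support_eq_crossEdges_split hM hHK hcard hd hsum
  obtain ⟨φ, hφ, rfl, hφne⟩ := hAexists dH hdH hsumH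
  obtain ⟨ψ, hψ, rfl, hψne⟩ := hBexists dK hdK hsumK
  refine ⟨φ + ψ + c, ?_, by rw [map_add, map_add], fun e heG he hAB => ?_⟩
  · have hcsub : c.support ⊆ (H ∪ K).sym2 := hc.subset.trans (mod_cast crossEdges_subset_sym2)
    exact (Function.support_add _ _).trans <| Set.union_subset ((Function.support_add _ _).trans <|
      Set.union_subset (hφ.trans hH) (hψ.trans hK)) hcsub
  have hdisj := disjoint_left.1 (disjoint_sym2 hHK)
  have hdisjH := disjoint_left.1 (disjoint_sym2_crossEdges (G := G) hHK)
  have hdisjK := disjoint_left.1 (crossEdges_comm (G := G) H K ▸ disjoint_sym2_crossEdges hHK.symm)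
  have hcsupp : c e ≠ 0 ↔ e ∈ crossEdges G H K := by rw [← mem_coe, ← hc, Function.mem_support]
  simp only [Function.support_subset_iff, mem_coe, Pi.add_apply] at hAsupp hBsupp hφ hψ hAB ⊢
  rcases mem_sym2_or_mem_crossEdges heG he with heH | heK | heHK
  · have hA0 : A e = 0 := by grind
    simpa [show ψ e = 0 by grind, show c e = 0 by grind] using hφne e heG heH hA0
  · have hB0 : B e = 0 := by grind
    simpa [show φ e = 0 by grind, show c e = 0 by grind] using hψne e heG heK hB0
  · simpa [show φ e = 0 by grind, show ψ e = 0 by grind] using hcsupp.2 heHK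

end Completable

section Extension

variable {V M : Type*} [Fintype V] {G : SimpleGraph V}

theorem exists_closedTrail_two_le_card_interedges [DecidableEq V]
    [DecidableRel G.Adj] (hG : G.IsEdgeConnected 3) {H : Finset V}
    (hH : H.Nonempty) (hHc : Hᶜ.Nonempty) :
    ∃ (x : V) (w : G.Walk x x), w.IsTrail ∧ Disjoint H w.support.toFinset ∧
      2 ≤ #(G.interedges H w.support.toFinset) := by
  obtain ⟨X, hXH, hXne, hXcut, hXconn⟩ := exists_isEdgeConnected_two_induce (G := G) hHc
  have hXHdisj : Disjoint X H := le_compl_iff_disjoint_right.1 hXH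
  have hXc : Xᶜ = H ∪ (Hᶜ \ X) := by
    ext v
    have hvX : v ∈ X → v ∉ H := fun hv => mem_compl.1 (hXH hv)
    simp only [mem_compl, mem_union, mem_sdiff]
    tauto
  have hXcut' : 3 ≤ #(G.interedges X Xᶜ) :=
    isEdgeConnected_iff_le_card_interedges.1 hG X hXne (hXc ▸ hH.inl)
  have htwo : 1 < #(G.interedges X H) := by
    rw [hXc, card_interedges_union_right X (disjoint_compl_right.mono_right sdiff_subset)] at hXcut'
    omega
  obtain ⟨⟨a, h⟩, hah, ⟨b, k⟩, hbk, hne⟩ := one_lt_card.1 htwo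
  rw [mk_mem_interedges_iff] at hah hbk
  obtain ⟨w, hw, hbw, hwX⟩ :=
    exists_closedTrail_support_subset_of_induce hXconn ⟨a, hah.1⟩ ⟨b, hbk.1⟩
  refine ⟨a, w, hw, ?_, one_lt_card.2 ⟨(h, a), ?_, (k, b), ?_, ?_⟩⟩
  · exact disjoint_left.2 fun v hvH hv =>
      disjoint_right.1 hXHdisj hvH (hwX v (List.mem_toFinset.1 hv))
  · simp [mk_mem_interedges_iff, hah.2.1, hah.2.2.symm]
  · simp [mk_mem_interedges_iff, hbk.2.1, hbk.2.2.symm, hbw]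
  · grind

variable [AddCommGroup M] [Module (ZMod 2) M]

theorem IsCompletable.exists_univ (hM : 2 < ENat.card M) (hG : G.IsEdgeConnected 3)
    {H : Finset V} {A : Sym2 V → ZMod 2} (hA : IsCompletable M G H A) (hH : H.Nonempty) :
    ∃ A' : Sym2 V → ZMod 2, IsCompletable M G univ A' ∧ ∀ v ∈ H, ∀ e, v ∈ e → A' e = A e := by
  classical
  induction hn : #Hᶜ using Nat.strong_induction_on generalizing H A with
  | h n ih =>
  obtain hHc | hHc := Hᶜ.eq_empty_or_nonempty
  · exact ⟨A, (compl_eq_empty_iff H).1 hHc ▸ hA, fun _ _ _ _ => rfl⟩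
  obtain ⟨x, w, hw, hdisj, hcard⟩ := exists_closedTrail_two_le_card_interedges hG hH hHc
  have : Nontrivial M := (ENat.one_lt_card_iff_nontrivial M).1 (one_le_two.trans_lt hM)
  have hunion := hA.union hM (isCompletable_of_closedTrail hw) hdisj hcard
  have hlt : #(H ∪ w.support.toFinset)ᶜ < n := by
    have hx : x ∈ w.support.toFinset := by simp
    exact hn ▸ card_lt_card (compl_ssubset_compl.2 ⟨subset_union_left, fun h =>
      disjoint_right.1 hdisj hx (h (mem_union_right _ hx))⟩)
  obtain ⟨A', hA', hA'eq⟩ := ih _ hlt hunion hH.inl rfl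
  refine ⟨A', hA', fun v hv e he => ?_⟩
  have hew : e ∉ w.edges := fun h => disjoint_left.1 hdisj hv
    (List.mem_toFinset.2 (Walk.mem_support_of_mem_edges h he))
  rw [hA'eq v (mem_union_left _ hv) e he, Pi.add_apply, edgeParity_of_notMem hew, add_zero]

theorem exists_isCompletable_eq_zero_of_mem [DecidableRel G.Adj] (hM : 2 < ENat.card M)
    (hG : G.IsEdgeConnected 3) {u v : V} (huv : G.Adj u v) (hv : G.degree v = 3) :
    ∃ (H : Finset V) (A : Sym2 V → ZMod 2), IsCompletable M G H A ∧ u ∈ H ∧ v ∈ H ∧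
      (∀ e, v ∈ e → A e = 0) ∧ ∃ e ∈ G.incidenceSet u, A e ≠ 0 := by
  classical
  obtain ⟨w, hw, hwu⟩ := exists_mem_ne
    (show 1 < #(G.neighborFinset v) by rw [card_neighborFinset_eq_degree]; omega) u
  rw [mem_neighborFinset] at hw
  obtain ⟨t, ht, hwt, hvt⟩ := exists_closedTrail_support_subset_of_induce
    (isEdgeConnected_induce_compl_singleton hG hv.le)
    ⟨u, by simpa using huv.ne⟩ ⟨w, by simpa using hw.ne'⟩
  replace hvt : v ∉ t.support := fun h => by simpa using hvt v h
  have : Nontrivial M := (ENat.one_lt_card_iff_nontrivial M).1 (one_le_two.trans_lt hM)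
  have hA := (isCompletable_of_closedTrail (M := M) ht).union hM
    (isCompletable_of_closedTrail (Walk.IsTrail.nil (u := v))) (by simpa using hvt)
    (one_lt_card.2 ⟨(u, v), by simp [mk_mem_interedges_iff, huv],
      (w, v), by simpa [mk_mem_interedges_iff, hwt] using hw.symm, by simp [hwu.symm]⟩)
  have hsnd : s(u, t.snd) ∈ t.edges :=
    t.mk_start_snd_mem_edges fun h => hwu (by simpa [h.eq_nil] using hwt)
  refine ⟨_, _, hA, by simp, by simp, fun e he => ?_, s(u, t.snd), ?_, ?_⟩
  · have het : e ∉ t.edges := fun h => hvt (Walk.mem_support_of_mem_edges h he)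
    rw [Pi.add_apply, edgeParity_of_notMem het, edgeParity_of_notMem (by simp), add_zero]
  · exact ⟨t.edges_subset_edgeSet hsnd, Sym2.mem_mk_left _ _⟩
  · rw [Pi.add_apply, edgeParity_of_mem ht hsnd, edgeParity_of_notMem (by simp), add_zero]
    exact one_ne_zero

end Extension

section Rich

variable {V M : Type*} {G : SimpleGraph V}

theorem finsum_mem_eq_of_ncard_eq_three {ι : Type*} [AddCommMonoid M] {S : Set ι}
    (hS : S.ncard = 3) {a b c : ι} (ha : a ∈ S) (hb : b ∈ S) (hc : c ∈ S) (hab : a ≠ b)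
    (hac : a ≠ c) (hbc : b ≠ c) (f : ι → M) : ∑ᶠ i ∈ S, f i = f a + f b + f c := by
  have htriple : ({a, b, c} : Set ι) = S := by
    refine Set.eq_of_subset_of_ncard_le (by grind) ?_ (Set.finite_of_ncard_ne_zero (by omega))
    rw [hS, Set.ncard_eq_three.2 ⟨a, b, c, hab, hac, hbc, rfl⟩]
  rw [← htriple, finsum_mem_insert _ (by grind) (by simp), finsum_mem_pair hbc, add_assoc]

theorem eq_of_eq_zero_of_finsum_mem_eq_zero {ι : Type*} [AddCommMonoid M] {S : Set ι}
    (hS : S.ncard = 3) {f : ι → M} (hsum : ∑ᶠ i ∈ S, f i = 0) {a b c : ι} (ha : a ∈ S)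
    (hb : b ∈ S) (hc : c ∈ S) (hfa : f a = 0) (hfb : f b ≠ 0) (hfc : f c = 0) : a = c := by
  by_contra hac
  rw [finsum_mem_eq_of_ncard_eq_three hS ha hb hc (by grind) hac (by grind), hfa, hfc, zero_add,
    add_zero] at hsum
  exact hfb hsum

theorem ncard_incidenceSet (v : V) : (G.incidenceSet v).ncard = (G.neighborSet v).ncard := by
  classical exact Nat.card_congr (G.incidenceSetEquivNeighborSet v)

theorem isNowhereZeroFlow_prodMk [Finite V] {N : Type*} [AddCommMonoid M] [AddCommMonoid N]
    {A : Sym2 V → N} {φ : Sym2 V → M} (hA : boundary G A = 0) (hφ : boundary G φ = 0)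
    (hne : ∀ e ∈ G.edgeSet, A e = 0 → φ e ≠ 0) : IsNowhereZeroFlow G fun e => (A e, φ e) := by
  refine ⟨fun e he h => hne e he (congrArg Prod.fst h) (congrArg Prod.snd h), fun v => ?_⟩
  have hfin : (G.incidenceSet v).Finite := Set.toFinite _
  ext
  · exact ((AddMonoidHom.fst N M).map_finsum_mem _ hfin).trans (congrFun hA v)
  · exact ((AddMonoidHom.snd N M).map_finsum_mem _ hfin).trans (congrFun hφ v)

variable [AddCommGroup M] [Module (ZMod 2) M] {θ : Sym2 V → M} {u v : V}

theorem ncard_colorSet (hθ : IsNowhereZeroFlow G θ) (hv : (G.neighborSet v).ncard = 3) :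
    (colorSet G θ v).ncard = 3 := by
  rw [← ncard_incidenceSet] at hv
  rw [← hv]
  refine Set.InjOn.ncard_image fun e he f hf hef => by_contra fun hne => ?_
  obtain ⟨g, hg, hgne⟩ := Set.exists_mem_notMem_of_ncard_lt_ncard (s := {e, f})
    (t := G.incidenceSet v) (by rw [Set.ncard_pair hne]; omega)
  have hsum := hθ.2 v
  rw [finsum_mem_eq_of_ncard_eq_three hv he hf hg hne (by grind) (by grind), hef,
    ZModModule.add_self, zero_add] at hsum
  exact hθ.1 g hg.1 hsum

theorem isRichAt_of_inter_subset (hθ : IsNowhereZeroFlow G θ) (huv : G.Adj u v)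
    (hu : (G.neighborSet u).ncard = 3) (hv : (G.neighborSet v).ncard = 3)
    (hinter : colorSet G θ u ∩ colorSet G θ v ⊆ {θ s(u, v)}) : IsRichAt G θ u v := by
  have hcu := ncard_colorSet hθ hu
  have hcv := ncard_colorSet hθ hv
  have huv_mem : θ s(u, v) ∈ colorSet G θ u ∩ colorSet G θ v :=
    ⟨⟨_, ⟨huv, Sym2.mem_mk_left _ _⟩, rfl⟩, ⟨_, ⟨huv, Sym2.mem_mk_right _ _⟩, rfl⟩⟩
  have hone : (colorSet G θ u ∩ colorSet G θ v).ncard = 1 :=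
    Set.ncard_eq_one.2 ⟨_, hinter.antisymm (Set.singleton_subset_iff.2 huv_mem)⟩
  have hadd := Set.ncard_union_add_ncard_inter (colorSet G θ u) (colorSet G θ v)
    (Set.finite_of_ncard_ne_zero (by omega)) (Set.finite_of_ncard_ne_zero (by omega))
  unfold IsRichAt
  omega

end Rich

theorem EdgeConnGe.isEdgeConnected {V : Type*} [Finite V] {G : SimpleGraph V} {k : ℕ}
    (hG : EdgeConnGe G k) : G.IsEdgeConnected k := by
  intro u v s hs
  have : s.ncard < k := by rwa [← s.toFinite.cast_ncard_eq, Nat.cast_lt] at hs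
  exact (hG.2 s this).preconnected u v

theorem stmt_12_general {V M : Type*} [Finite V] [AddCommGroup M] [Module (ZMod 2) M]
    (hM : 2 < ENat.card M) (G : SimpleGraph V) (hG : G.IsEdgeConnected 3) {u v : V}
    (huv : G.Adj u v) (hu : (G.neighborSet u).ncard = 3) (hv : (G.neighborSet v).ncard = 3) :
    ∃ θ : Sym2 V → ZMod 2 × M, IsNowhereZeroFlow G θ ∧ IsRichAt G θ u v := by
  classical
  cases nonempty_fintype V
  have hdeg : G.degree v = 3 := (Set.ncard_eq_toFinset_card' _).symm.trans hv
  obtain ⟨H, A₀, hA₀, huH, hvH, hv₀, f, hfu, hf⟩ :=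
    exists_isCompletable_eq_zero_of_mem hM hG huv hdeg
  obtain ⟨A, hA, hAeq⟩ := hA₀.exists_univ hM hG ⟨u, huH⟩
  obtain ⟨φ, -, hφ, hφne⟩ := hA.exists_boundary_eq 0 (by simp) (by simp)
  have hflow : IsNowhereZeroFlow G fun e => (A e, φ e) :=
    isNowhereZeroFlow_prodMk hA.boundary_eq_zero hφ fun e he => hφne e he (by simp)
  refine ⟨_, hflow, isRichAt_of_inter_subset hflow huv hu hv ?_⟩
  rintro _ ⟨⟨e, he, rfl⟩, g, hg, hge⟩
  have hAv : ∀ e, v ∈ e → A e = 0 := fun e he => (hAeq v hvH e he).trans (hv₀ e he)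
  have hAf : A f ≠ 0 := hAeq u huH f hfu.2 ▸ hf
  have hAe : A e = 0 := (congrArg Prod.fst hge).symm.trans (hAv g hg.2)
  have hAuv : A s(u, v) = 0 := hAv _ (Sym2.mem_mk_right _ _)
  have he_eq : s(u, v) = e := eq_of_eq_zero_of_finsum_mem_eq_zero
    ((ncard_incidenceSet u).trans hu) (congrFun hA.boundary_eq_zero u)
    ⟨huv, Sym2.mem_mk_left _ _⟩ hfu he hAuv hAf hAe
  rw [he_eq, Set.mem_singleton_iff]

theorem stmt_12 {V : Type*} [Fintype V] (G : SimpleGraph V)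
    (hG : IsCubic G) (hconn : EdgeConnGe G 3) (u v : V) (huv : G.Adj u v) :
    ∃ θ : Sym2 V → ZMod 2 × ZMod 2 × ZMod 2,
      IsNowhereZeroFlow G θ ∧ IsRichAt G θ u v := by
  have hcard : 2 < ENat.card (ZMod 2 × ZMod 2) := by norm_num [ENat.card_eq_coe_fintype_card]
  exact stmt_12_general hcard G hconn.isEdgeConnected huv (hG u) (hG v)
end

section
/- Let G be a finite simple bridgeless cubic graph on a vertex set V and let uw be an edge of G. Let G' be the simple graph on V ∪ {s, t} (where s and t are two new vertices) whose edges are all edges of G except uw, together with the edges us, sw, and st. Then G' admits a proper edge-coloring with 7 colors in which every edge except the pendant edge st is poor or rich. -/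
open SimpleGraph

/-- The graph obtained from `G` by subdividing the edge `uw` with a new vertex `Sum.inr 0`
and attaching a pendant edge from `Sum.inr 0` to the new degree-one vertex `Sum.inr 1`. -/
def subdividePendant {V : Type*} (G : SimpleGraph V) (u w : V) : SimpleGraph (V ⊕ Fin 2) :=
  SimpleGraph.fromEdgeSet
    ((Sym2.map Sum.inl '' (G.edgeSet \ {s(u, w)})) ∪
      {s(Sum.inl u, Sum.inr 0), s(Sum.inl w, Sum.inr 0), s(Sum.inr 0, Sum.inr 1)})

/-!
The colours are the nonzero vectors of `𝔽₂³`, and poor or rich edges come from Kirchhoff's law: at a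
vertex where it holds the three colours form a line of the Fano plane, and two lines through a
common point have `3` or `5` points in all.

A flow with values in `𝔽₂³` is a linear map on the space of edges modulo cuts. If no edge is a
bridge, then counting vertex cuts in contractions shows that at most `3 d - 3` edge classes lie in a
subspace of dimension `d ≥ 2`. By Edmonds' matroid partition theorem three functionals therefore
separate all edge classes from `0`, and there is room to prescribe one coincidence of values: the
prescription can only be obstructed by a Fano plane of edge classes, which the bound excludes.

The pendant edge `st` is a bridge, so no nowhere-zero flow exists on the whole graph. Choose a cut
consisting of two edges `py` and `e'` with a minimal side `X ∋ p` avoiding `s` and `t`. A flow on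
each side, obtained by collapsing the other one, has a prescribed coincidence near `py`. After a
linear automorphism of `𝔽₂³` the two agree except on `py`, so the glued map violates Kirchhoff's law
only at `p` (and `t`). The coincidences make the sum `v` of the colours at `p` appear at every
neighbour of `p`, and this forces all three edges at `p` to be rich.
-/

section RankFunction

variable {α ι : Type*} [DecidableEq α]

/-- A matroid given by its rank function on finite sets. -/
structure IsRankFunction (r : Finset α → ℕ) : Prop where
  map_empty : r ∅ = 0
  mono : Monotone r
  map_insert_le : ∀ e A, r (insert e A) ≤ r A + 1
  submodular : ∀ A B, r (A ∪ B) + r (A ∩ B) ≤ r A + r B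

/-- The rank function of the contraction by `T`. -/
def contractRank (r : Finset α → ℕ) (T B : Finset α) : ℕ := r (T ∪ B) - r T

/-- The fibres of `c` split `E` into sets `Eᵢ` such that `Eᵢ` is independent for the `i`-th rank
function; independence is stated as `#Eᵢ ≤ r i Eᵢ`. -/
def IsIndepPartition [DecidableEq ι] (r : ι → Finset α → ℕ) (E : Finset α) (c : α → ι) : Prop :=
  ∀ i, (E.filter (c · = i)).card ≤ r i (E.filter (c · = i))

namespace IsRankFunction

variable {r : Finset α → ℕ}

theorem contract (hr : IsRankFunction r) (T : Finset α) :
    IsRankFunction (contractRank r T) := by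
  have le_union (A : Finset α) : r T ≤ r (T ∪ A) := hr.mono Finset.subset_union_left
  refine ⟨by simp [contractRank], fun A B hAB => ?_, fun e A => ?_, fun A B => ?_⟩ <;>
    simp only [contractRank]
  · have := hr.mono (Finset.union_subset_union_right hAB : T ∪ A ⊆ T ∪ B)
    omega
  · have := hr.map_insert_le e (T ∪ A)
    rw [Finset.union_insert]
    have := le_union A
    omega
  · have := hr.submodular (T ∪ A) (T ∪ B)
    rw [← Finset.union_union_distrib_left, ← Finset.union_inter_distrib_left] at this
    have := le_union A
    have := le_union B
    have := le_union (A ∩ B)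
    have := le_union (A ∪ B)
    omega

theorem card_union_le_of_contractRank (hr : IsRankFunction r) {T I J : Finset α} (hIT : I ⊆ T)
    (hJT : Disjoint J T) (hI : I.card ≤ r I) (hJ : J.card ≤ contractRank r T J) :
    (I ∪ J).card ≤ r (I ∪ J) := by
  have hsub := hr.submodular T (I ∪ J)
  have hunion : T ∪ (I ∪ J) = T ∪ J := by grind
  have hinter : T ∩ (I ∪ J) = I := by grind [Finset.disjoint_left]
  rw [hunion, hinter] at hsub
  have := Finset.card_union_le I J
  have := hr.mono (Finset.subset_union_left : T ⊆ T ∪ J)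
  unfold contractRank at hJ
  omega

end IsRankFunction

variable {r : ι → Finset α → ℕ} {E A : Finset α}

theorem IsIndepPartition.piecewise [DecidableEq ι] (hr : ∀ i, IsRankFunction (r i)) (hAE : A ⊆ E)
    {T : ι → Finset α} (hTA : ∀ i, T i ⊆ A) {c₁ c₂ : α → ι}
    (hT : ∀ i, A.filter (c₁ · = i) ⊆ T i) (h₁ : IsIndepPartition r A c₁)
    (h₂ : IsIndepPartition (fun i => contractRank (r i) (T i)) (E \ A) c₂) :
    IsIndepPartition r E (A.piecewise c₁ c₂) := by
  intro i
  have hfilter : E.filter (A.piecewise c₁ c₂ · = i) =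
      A.filter (c₁ · = i) ∪ (E \ A).filter (c₂ · = i) := by
    ext x
    by_cases hx : x ∈ A <;> simp [hx, @hAE x]
  rw [hfilter]
  refine (hr i).card_union_le_of_contractRank (hT i) ?_ (h₁ i) (h₂ i)
  exact (Finset.sdiff_disjoint.mono_right (hTA i)).mono_left (Finset.filter_subset _ _)

variable [Fintype ι]

theorem card_le_sum_contractRank_of_tight (hr : ∀ i, IsRankFunction (r i)) (hAE : A ⊆ E)
    (hE : ∀ B ⊆ E, B.card ≤ ∑ i, r i B) (hA : ∑ i, r i A ≤ A.card) {B : Finset α}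
    (hB : B ⊆ E \ A) : B.card ≤ ∑ i, contractRank (r i) A B := by
  have hcard := hE (A ∪ B) (Finset.union_subset hAE (hB.trans Finset.sdiff_subset))
  rw [Finset.card_union_of_disjoint (Finset.disjoint_sdiff.mono_right hB)] at hcard
  have hsum : ∑ i, contractRank (r i) A B + ∑ i, r i A = ∑ i, r i (A ∪ B) := by
    rw [← Finset.sum_add_distrib]
    exact Finset.sum_congr rfl fun i _ =>
      Nat.sub_add_cancel ((hr i).mono Finset.subset_union_left)
  omega

variable [DecidableEq ι]

theorem sum_le_sum_contractRank_singleton_add_one (hr : ∀ i, IsRankFunction (r i)) (e : α) (i₀ : ι)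
    (B : Finset α) :
    ∑ i, r i B ≤ ∑ i, contractRank (r i) (if i = i₀ then {e} else ∅) B + 1 := by
  have hle (i : ι) :
      r i B ≤ contractRank (r i) (if i = i₀ then {e} else ∅) B + if i = i₀ then 1 else 0 := by
    unfold contractRank
    split_ifs
    · have := (hr i).mono (Finset.subset_union_right : B ⊆ {e} ∪ B)
      have := (hr i).map_insert_le e ∅
      simp only [(hr i).map_empty, insert_empty_eq] at this
      omega
    · simp [(hr i).map_empty]
  simpa [Finset.sum_add_distrib] using Finset.sum_le_sum fun i (_ : i ∈ Finset.univ) => hle i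

/-- Edmonds' matroid partition theorem. -/
theorem exists_isIndepPartition [Nonempty ι] (E : Finset α) :
    ∀ r : ι → Finset α → ℕ, (∀ i, IsRankFunction (r i)) →
      (∀ A ⊆ E, A.card ≤ ∑ i, r i A) → ∃ c, IsIndepPartition r E c := by
  induction E using Finset.strongInduction with
  | _ E ih =>
  intro r hr hE
  obtain rfl | ⟨e, he⟩ := E.eq_empty_or_nonempty
  · exact ⟨fun _ => Classical.arbitrary ι, by simp [IsIndepPartition]⟩
  by_cases htight : ∃ A ⊂ E, A.Nonempty ∧ ∑ i, r i A ≤ A.card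
  · obtain ⟨A, hAE, hA₀, hA⟩ := htight
    obtain ⟨c₁, h₁⟩ := ih A hAE r hr fun B hB => hE B (hB.trans hAE.subset)
    obtain ⟨c₂, h₂⟩ := ih (E \ A) (Finset.sdiff_ssubset hAE.subset hA₀) _
      (fun i => (hr i).contract A)
      fun B => card_le_sum_contractRank_of_tight hr hAE.subset hE hA
    exact ⟨_, h₁.piecewise hr hAE.subset (fun _ => subset_rfl)
      (fun _ => Finset.filter_subset _ _) h₂⟩
  · push Not at htight
    obtain ⟨i₀, -, hi₀⟩ : ∃ i₀ ∈ Finset.univ, 0 < r i₀ {e} := by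
      have := hE {e} (Finset.singleton_subset_iff.2 he)
      rw [Finset.card_singleton] at this
      exact (Finset.sum_pos_iff_of_nonneg fun _ _ => Nat.zero_le _).1 this
    have hfilter (i : ι) :
        ({e} : Finset α).filter (fun _ => i₀ = i) = if i = i₀ then {e} else ∅ := by
      simp [Finset.filter_const, eq_comm]
    have h₁ : IsIndepPartition r {e} fun _ => i₀ := fun i => by
      rw [hfilter]
      split_ifs with h
      · simpa [h, Nat.one_le_iff_ne_zero, Nat.pos_iff_ne_zero] using hi₀
      · simp
    obtain ⟨c, h₂⟩ := ih (E \ {e}) (Finset.sdiff_ssubset (by simpa using he) (by simp)) _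
      (fun i => (hr i).contract (if i = i₀ then {e} else ∅)) fun B hB => by
        obtain rfl | hB₀ := B.eq_empty_or_nonempty
        · simp
        have := htight B (hB.trans_ssubset (by grind)) hB₀
        have := sum_le_sum_contractRank_singleton_add_one hr e i₀ B
        omega
    refine ⟨_, h₁.piecewise hr (Finset.singleton_subset_iff.2 he) (fun i => ?_)
      (fun i => (hfilter i).subset) h₂⟩
    split_ifs <;> simp

end RankFunction

section CoveringByFunctionals

open Module Submodule

variable {K α ι W : Type*} [Field K] [AddCommGroup W] [Module K W]

theorem exists_functional_eq_one_of_card_le_finrank_span {v : α → W} {I : Finset α}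
    (hI : I.card ≤ finrank K (span K (v '' I))) : ∃ l : W →ₗ[K] K, ∀ x ∈ I, l (v x) = 1 := by
  have hind : LinearIndependent K fun x : I => v x := by
    have hrange : Set.range (fun x : I => v x) = v '' I := by ext; simp
    rw [linearIndependent_iff_card_le_finrank_span, Fintype.card_coe, hrange]
    exact hI
  obtain ⟨g, hg⟩ := LinearMap.exists_leftInverse_of_injective
    (Finsupp.linearCombination K fun x : I => v x) (LinearMap.ker_eq_bot.2 hind)
  refine ⟨Finsupp.linearCombination K (fun _ => 1) ∘ₗ g, fun x hx => ?_⟩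
  have hgx := LinearMap.congr_fun hg (Finsupp.single ⟨x, hx⟩ 1)
  simp only [LinearMap.comp_apply, Finsupp.linearCombination_single, one_smul,
    LinearMap.id_apply] at hgx
  simp [hgx]

variable [FiniteDimensional K W]

theorem isRankFunction_finrank_span_image [DecidableEq α] (v : α → W) :
    IsRankFunction fun A : Finset α => finrank K (span K (v '' A)) where
  map_empty := by simp
  mono A B hAB := finrank_mono (span_mono (Set.image_mono (Finset.coe_subset.2 hAB)))
  map_insert_le e A := by
    rw [Finset.coe_insert, Set.image_insert_eq, span_insert]
    have := finrank_add_le_finrank_add_finrank (span K {v e}) (span K (v '' A))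
    have : finrank K (span K {v e}) ≤ 1 := by
      simpa using finrank_span_le_card (R := K) {v e}
    omega
  submodular A B := by
    rw [Finset.coe_union, Finset.coe_inter, Set.image_union, span_union]
    have := finrank_sup_add_finrank_inf_eq (span K (v '' A)) (span K (v '' B))
    have : finrank K (span K (v '' (A ∩ B))) ≤
        finrank K (span K (v '' A) ⊓ span K (v '' B) : Submodule K W) :=
      finrank_mono (le_inf (span_mono (Set.image_mono Set.inter_subset_left))
        (span_mono (Set.image_mono Set.inter_subset_right)))
    omega

theorem exists_linearMap_pi_apply_ne_zero [Fintype ι] [Nonempty ι] (v : α → W) (S : Finset α)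
    (hS : ∀ A ⊆ S, A.card ≤ Fintype.card ι * finrank K (span K (v '' A))) :
    ∃ θ : W →ₗ[K] ι → K, ∀ x ∈ S, θ (v x) ≠ 0 := by
  classical
  obtain ⟨c, hc⟩ := exists_isIndepPartition S (fun _ : ι => _)
    (fun _ => isRankFunction_finrank_span_image (K := K) v) (by simpa using hS)
  choose l hl using fun i => exists_functional_eq_one_of_card_le_finrank_span (hc i)
  refine ⟨LinearMap.pi l, fun x hx h0 => one_ne_zero (α := K) ?_⟩
  rw [← hl (c x) x (by simp [hx])]
  exact congrFun h0 (c x)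

end CoveringByFunctionals

section LinearAlgebra

open Module Submodule

variable {K Q : Type*} [Field K] [AddCommGroup Q] [Module K Q] [FiniteDimensional K Q]

theorem finrank_sup_span_singleton_le (U : Submodule K Q) (x : Q) :
    finrank K (U ⊔ span K {x} : Submodule K Q) ≤ finrank K U + 1 := by
  have := finrank_add_le_finrank_add_finrank U (span K {x})
  have : finrank K (span K {x}) ≤ 1 := by simpa using finrank_span_le_card (R := K) {x}
  omega

theorem finrank_span_image_mkQ_add (v : Q) (A : Set Q) :
    finrank K (span K ((span K {v}).mkQ '' A)) + finrank K (span K {v}) =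
      finrank K (span K {v} ⊔ span K A : Submodule K Q) := by
  have h := ((span K {v}).mkQ.domRestrict (span K {v} ⊔ span K A)).finrank_range_add_finrank_ker
  rw [LinearMap.range_domRestrict, LinearMap.ker_domRestrict, Submodule.map_sup, ker_mkQ,
    mkQ_map_self, bot_sup_eq, map_span] at h
  rw [← h, LinearEquiv.finrank_eq (comapSubtypeEquivOfLe le_sup_left)]

open Classical in
theorem exists_linearMap_pi_apply_eq_zero_and_apply_ne_zero {ι : Type*} [Fintype ι] [Nonempty ι]
    (S : Finset Q) (v : Q)
    (hS : ∀ U : Submodule K Q, v ∈ U →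
      (S.filter (· ∈ U)).card + Fintype.card ι * finrank K (span K {v}) ≤
        Fintype.card ι * finrank K U) :
    ∃ θ : Q →ₗ[K] ι → K, θ v = 0 ∧ ∀ x ∈ S, θ x ≠ 0 := by
  obtain ⟨θ, hθ⟩ := exists_linearMap_pi_apply_ne_zero (ι := ι) (K := K) (span K {v}).mkQ S
    fun A hA => by
      have hU := hS (span K {v} ⊔ span K A) (mem_sup_left (mem_span_singleton_self v))
      have hle : A.card ≤ (S.filter (· ∈ span K {v} ⊔ span K (A : Set Q))).card :=
        Finset.card_le_card fun x hx =>
          Finset.mem_filter.2 ⟨hA hx, mem_sup_right (subset_span hx)⟩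
      rw [← finrank_span_image_mkQ_add, mul_add] at hU
      omega
  refine ⟨θ ∘ₗ (span K {v}).mkQ, ?_, hθ⟩
  have hv : (span K {v}).mkQ v = 0 := by simp [mem_span_singleton_self]
  rw [LinearMap.comp_apply, hv, map_zero]

end LinearAlgebra

/-- The additive relations between the class `e₀` of an edge, the classes `e₁, e₂` of the two edges
adjacent to it at one end, and the classes `f₁, f₂` and `g₁, g₂` of the edges branching off at the
far ends of these. -/
structure IsBranching {Q : Type*} [AddCommGroup Q] (S : Finset Q) (e₀ e₁ e₂ f₁ f₂ g₁ g₂ : Q) :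
    Prop where
  mem_e₀ : e₀ ∈ S
  mem_e₁ : e₁ ∈ S
  mem_e₂ : e₂ ∈ S
  mem_f₁ : f₁ ∈ S
  mem_f₂ : f₂ ∈ S
  mem_g₁ : g₁ ∈ S
  mem_g₂ : g₂ ∈ S
  add_e : e₁ + e₂ = e₀
  add_f : f₁ + f₂ = e₁
  add_g : g₁ + g₂ = e₂
  f₁_ne : f₁ ≠ e₀
  f₂_ne : f₂ ≠ e₀
  g₁_ne : g₁ ≠ e₀
  g₂_ne : g₂ ≠ e₀

namespace IsBranching

variable {Q : Type*} [AddCommGroup Q] {S : Finset Q} {e₀ e₁ e₂ f₁ f₂ g₁ g₂ : Q}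

theorem swap (h : IsBranching S e₀ e₁ e₂ f₁ f₂ g₁ g₂) : IsBranching S e₀ e₂ e₁ g₁ g₂ f₁ f₂ where
  __ := h
  add_e := add_comm e₁ e₂ ▸ h.add_e
  add_f := h.add_g
  add_g := h.add_f
  mem_e₁ := h.mem_e₂
  mem_e₂ := h.mem_e₁
  mem_f₁ := h.mem_g₁
  mem_f₂ := h.mem_g₂
  mem_g₁ := h.mem_f₁
  mem_g₂ := h.mem_f₂
  f₁_ne := h.g₁_ne
  f₂_ne := h.g₂_ne
  g₁_ne := h.f₁_ne
  g₂_ne := h.f₂_ne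

theorem swap_f (h : IsBranching S e₀ e₁ e₂ f₁ f₂ g₁ g₂) : IsBranching S e₀ e₁ e₂ f₂ f₁ g₁ g₂ where
  __ := h
  add_f := add_comm f₁ f₂ ▸ h.add_f
  mem_f₁ := h.mem_f₂
  mem_f₂ := h.mem_f₁
  f₁_ne := h.f₂_ne
  f₂_ne := h.f₁_ne

theorem swap_g (h : IsBranching S e₀ e₁ e₂ f₁ f₂ g₁ g₂) : IsBranching S e₀ e₁ e₂ f₁ f₂ g₂ g₁ :=
  h.swap.swap_f.swap

end IsBranching

section Sparse

open Module Submodule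
open scoped Classical

variable {Q : Type*} [AddCommGroup Q] [Module (ZMod 2) Q]

/-- Sparsity of a set of nonzero vectors in a binary space: it meets every subspace of dimension
`d ≥ 2` in at most `3 d - 3` vectors. The edge classes of a graph without bridges have this
property, and it is what allows them to be separated from `0` by three functionals. -/
structure IsSparse (S : Finset Q) : Prop where
  zero_notMem : 0 ∉ S
  card_filter_add_three_le : ∀ U : Submodule (ZMod 2) Q, 2 ≤ finrank (ZMod 2) U →
    (S.filter (· ∈ U)).card + 3 ≤ 3 * finrank (ZMod 2) U

theorem eq_of_finrank_le_one [FiniteDimensional (ZMod 2) Q] {U : Submodule (ZMod 2) Q}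
    (hU : finrank (ZMod 2) U ≤ 1) {x y : Q} (hxU : x ∈ U) (hyU : y ∈ U) (hx : x ≠ 0) (hy : y ≠ 0) :
    x = y := by
  obtain ⟨v, hv⟩ := finrank_le_one_iff.1 hU
  obtain ⟨a, ha⟩ := hv ⟨x, hxU⟩
  obtain ⟨b, hb⟩ := hv ⟨y, hyU⟩
  have hbinary : ∀ c : ZMod 2, c = 0 ∨ c = 1 := by decide
  rw [Subtype.ext_iff] at ha hb
  rcases hbinary a with rfl | rfl <;> rcases hbinary b with rfl | rfl <;> simp_all

theorem two_le_finrank_of_mem_of_mem [FiniteDimensional (ZMod 2) Q] {U : Submodule (ZMod 2) Q}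
    {x y : Q} (hxU : x ∈ U) (hyU : y ∈ U) (hx : x ≠ 0) (hy : y ≠ 0) (hxy : x ≠ y) :
    2 ≤ finrank (ZMod 2) U := by
  by_contra! hU
  exact hxy (eq_of_finrank_le_one (by omega) hxU hyU hx hy)

theorem mem_sup_span_singleton_iff {U : Submodule (ZMod 2) Q} {x y : Q} :
    x ∈ U ⊔ span (ZMod 2) {y} ↔ x ∈ U ∨ x + y ∈ U := by
  have hbinary : ∀ c : ZMod 2, c = 0 ∨ c = 1 := by decide
  have hy := mem_span_singleton_self (R := ZMod 2) y
  constructor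
  · rintro hx
    obtain ⟨z, hz, _, hcy, rfl⟩ := mem_sup.1 hx
    obtain ⟨c, rfl⟩ := mem_span_singleton.1 hcy
    rcases hbinary c with rfl | rfl
    · simp [hz]
    · simp [hz, add_assoc, ZModModule.add_self]
  · rintro (hx | hx)
    · exact mem_sup_left hx
    · simpa [add_assoc, ZModModule.add_self] using add_mem (mem_sup_left hx) (mem_sup_right hy)

theorem card_filter_add_card_le_card_filter_sup {S T : Finset Q} {U : Submodule (ZMod 2) Q} {y : Q}
    (hTS : T ⊆ S) (hy : y ∉ U) (hTU : ∀ x ∈ T, x + y ∈ U) :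
    (S.filter (· ∈ U)).card + T.card ≤ (S.filter (· ∈ U ⊔ span (ZMod 2) {y})).card := by
  rw [← Finset.card_union_of_disjoint (Finset.disjoint_left.2 fun x hx hxT =>
    hy ((U.add_mem_iff_right (Finset.mem_filter.1 hx).2).1 (hTU x hxT)))]
  refine Finset.card_le_card fun x hx => ?_
  rw [Finset.mem_filter, mem_sup_span_singleton_iff]
  rcases Finset.mem_union.1 hx with hxU | hxT
  · exact ⟨(Finset.mem_filter.1 hxU).1, .inl (Finset.mem_filter.1 hxU).2⟩
  · exact ⟨hTS hxT, .inr (hTU x hxT)⟩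

theorem card_fano {a b c : Q} (h : 0 ∉ ({a, b, c, a + b, a + c, b + c, a + b + c} : Finset Q)) :
    ({a, b, c, a + b, a + c, b + c, a + b + c} : Finset Q).card = 7 := by
  have haa := ZModModule.add_self a
  have hbb := ZModModule.add_self b
  have hcc := ZModModule.add_self c
  simp only [Finset.mem_insert, Finset.mem_singleton, not_or, eq_comm (a := (0 : Q))] at h
  repeat rw [Finset.card_insert_of_notMem]
  · rfl
  all_goals
    simp only [Finset.mem_insert, Finset.mem_singleton, not_or]
    grind

namespace IsSparse

variable {S : Finset Q} {e₀ e₁ e₂ f₁ f₂ g₁ g₂ : Q}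

theorem ne_zero (hS : IsSparse S) {x : Q} (hx : x ∈ S) : x ≠ 0 :=
  ne_of_mem_of_not_mem hx hS.zero_notMem

theorem card_eq_four_of_isBranching (hS : IsSparse S) (h : IsBranching S e₀ e₁ e₂ f₁ f₂ g₁ g₂)
    (hfg : f₁ + g₁ ≠ e₀) : ({e₁, e₂, f₂, g₂} : Finset Q).card = 4 := by
  have hff := ZModModule.add_self f₂
  have hgg := ZModModule.add_self g₂
  have hee := ZModModule.add_self e₂
  have hfg₂ : f₂ ≠ g₂ := by grind [h.add_e, h.add_f, h.add_g]
  have he := hS.ne_zero h.mem_e₀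
  have hf := hS.ne_zero h.mem_f₁
  have hg := hS.ne_zero h.mem_g₁
  grind [h.add_e, h.add_f, h.add_g, h.f₁_ne, h.g₁_ne]

variable [FiniteDimensional (ZMod 2) Q] {U : Submodule (ZMod 2) Q} {v : Q}

theorem card_filter_le_one (hS : IsSparse S) (hU : finrank (ZMod 2) U ≤ 1) :
    (S.filter (· ∈ U)).card ≤ 1 := by
  refine Finset.card_le_one.2 fun x hx y hy => ?_
  rw [Finset.mem_filter] at hx hy
  exact eq_of_finrank_le_one hU hx.2 hy.2 (hS.ne_zero hx.1) (hS.ne_zero hy.1)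

theorem card_filter_add_le (hS : IsSparse S) (hv : v ∉ S) (hvU : v ∈ U) :
    (S.filter (· ∈ U)).card + 3 * finrank (ZMod 2) (span (ZMod 2) {v}) ≤
      3 * finrank (ZMod 2) U := by
  have hspan : finrank (ZMod 2) (span (ZMod 2) {v}) ≤ 1 := by
    simpa using finrank_span_le_card (R := ZMod 2) {v}
  obtain hU | hU := le_or_gt 2 (finrank (ZMod 2) U)
  · have := hS.card_filter_add_three_le U hU
    omega
  obtain hempty | ⟨x, hx⟩ := (S.filter (· ∈ U)).eq_empty_or_nonempty
  · have := finrank_mono ((span_singleton_le_iff_mem v U).2 hvU)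
    rw [hempty, Finset.card_empty]
    omega
  · rw [Finset.mem_filter] at hx
    have hx₀ : x ≠ 0 := hS.ne_zero hx.1
    have hv₀ : v = 0 := by
      by_contra hv₀
      exact hv (eq_of_finrank_le_one (by omega) hvU hx.2 hv₀ hx₀ ▸ hx.1)
    have hpos : 1 ≤ finrank (ZMod 2) U :=
      one_le_finrank_iff.2 ((Submodule.ne_bot_iff U).2 ⟨x, hx.2, hx₀⟩)
    have := hS.card_filter_le_one (U := U) (by omega)
    subst hv₀
    rw [span_zero_singleton, finrank_bot]
    omega

theorem exists_linearMap_apply_eq_zero (hS : IsSparse S) (hv : v ∉ S) :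
    ∃ θ : Q →ₗ[ZMod 2] Fin 3 → ZMod 2, θ v = 0 ∧ ∀ x ∈ S, θ x ≠ 0 :=
  exists_linearMap_pi_apply_eq_zero_and_apply_ne_zero S v fun _ hvU => by
    simpa using hS.card_filter_add_le hv hvU

theorem not_fano_subset (hS : IsSparse S) (a b c : Q) :
    ¬ {a, b, c, a + b, a + c, b + c, a + b + c} ⊆ S := by
  intro hsub
  have hzero : 0 ∉ ({a, b, c, a + b, a + c, b + c, a + b + c} : Finset Q) :=
    fun h => hS.zero_notMem (hsub h)
  have hspan : {a, b, c, a + b, a + c, b + c, a + b + c} ⊆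
      S.filter (· ∈ span (ZMod 2) {a, b, c}) := by
    intro x hx
    refine Finset.mem_filter.2 ⟨hsub hx, ?_⟩
    have ha : a ∈ span (ZMod 2) {a, b, c} := subset_span (by simp)
    have hb : b ∈ span (ZMod 2) {a, b, c} := subset_span (by simp)
    have hc : c ∈ span (ZMod 2) {a, b, c} := subset_span (by simp)
    simp only [Finset.mem_insert, Finset.mem_singleton] at hx
    rcases hx with rfl | rfl | rfl | rfl | rfl | rfl | rfl <;> simp [add_mem, *]
  have hcard := card_fano hzero ▸ Finset.card_le_card hspan
  have hdim : finrank (ZMod 2) (span (ZMod 2) {a, b, c}) ≤ 3 := by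
    have := (finrank_span_finset_le_card (R := ZMod 2) {a, b, c}).trans Finset.card_le_three
    rwa [Finset.coe_insert, Finset.coe_insert, Finset.coe_singleton] at this
  have htwo : 2 ≤ finrank (ZMod 2) (span (ZMod 2) {a, b, c}) := by
    by_contra! hlt
    have := hS.card_filter_le_one (U := span (ZMod 2) {a, b, c}) (by omega)
    omega
  have := hS.card_filter_add_three_le _ htwo
  omega

theorem exists_linearMap_apply_eq_of_path (hS : IsSparse S) {r h₁ h₂ : Q} (hr : r ∈ S)
    (hh₁ : h₁ ∈ S) (hh₂ : h₂ ∈ S) (hadd : h₁ + h₂ ∈ S) (hradd : r + (h₁ + h₂) ∈ S) :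
    ∃ θ : Q →ₗ[ZMod 2] Fin 3 → ZMod 2, (∀ x ∈ S, θ x ≠ 0) ∧ (θ h₁ = θ r ∨ θ h₂ = θ r) := by
  obtain hnot | hnot : r + h₁ ∉ S ∨ r + h₂ ∉ S := by
    by_contra! hall
    refine hS.not_fano_subset r h₁ h₂ fun x hx => ?_
    simp only [Finset.mem_insert, Finset.mem_singleton] at hx
    rcases hx with rfl | rfl | rfl | rfl | rfl | rfl | rfl <;> simp [add_assoc, *]
  all_goals
    obtain ⟨θ, hzero, hθ⟩ := hS.exists_linearMap_apply_eq_zero hnot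
    rw [map_add, add_eq_zero_iff_eq_neg, ZModModule.neg_eq_self] at hzero
    exact ⟨θ, hθ, by simp [hzero]⟩

theorem card_filter_add_four_le_of_mem (hS : IsSparse S)
    (h : IsBranching S e₀ e₁ e₂ f₁ f₂ g₁ g₂) (hfg : f₁ ≠ g₁) (hfgU : f₁ + g₁ ∈ U)
    (hefU : e₀ + f₁ ∈ U) (hfU : f₁ ∉ U) (he₁U : e₁ ∈ U) :
    (S.filter (· ∈ U)).card + 4 ≤ 3 * finrank (ZMod 2) U := by
  have hcard : ({e₀, e₂, f₁, g₁} : Finset Q).card = 4 := by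
    have := ZModModule.add_self f₁
    grind [h.add_e, h.add_f, h.add_g, h.f₂_ne, h.f₁_ne, h.g₁_ne, hS.ne_zero h.mem_e₁,
      hS.ne_zero h.mem_g₂]
  have hcoset : ∀ x ∈ ({e₀, e₂, f₁, g₁} : Finset Q), x + f₁ ∈ U := by
    have he₂ : e₂ + f₁ = e₁ + (e₀ + f₁) := by
      rw [← h.add_e, ← add_assoc, ← add_assoc, ZModModule.add_self, zero_add]
    simp only [Finset.mem_insert, Finset.mem_singleton, forall_eq_or_imp, forall_eq, he₂,
      ZModModule.add_self, add_comm g₁]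
    exact ⟨hefU, add_mem he₁U hefU, zero_mem U, hfgU⟩
  have hgrow := card_filter_add_card_le_card_filter_sup (S := S) (by
    grind [h.mem_e₀, h.mem_e₂, h.mem_f₁, h.mem_g₁]) hfU hcoset
  have hbound := hS.card_filter_add_three_le (U ⊔ span (ZMod 2) {f₁})
    (two_le_finrank_of_mem_of_mem (mem_sup_span_singleton_iff.2 (.inr hefU))
      (mem_sup_right (mem_span_singleton_self f₁)) (hS.ne_zero h.mem_e₀) (hS.ne_zero h.mem_f₁)
      h.f₁_ne.symm)
  have := finrank_sup_span_singleton_le U f₁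
  omega

theorem card_filter_add_four_le_of_notMem (hS : IsSparse S)
    (h : IsBranching S e₀ e₁ e₂ f₁ f₂ g₁ g₂) (hfg : f₁ ≠ g₁) (hfgU : f₁ + g₁ ∈ U)
    (hefU : e₀ + f₁ ∈ U) (hfU : f₁ ∉ U) (he₁U : e₁ ∉ U) (he₂U : e₂ ∉ U) :
    (S.filter (· ∈ U)).card + 4 ≤ 3 * finrank (ZMod 2) U := by
  let U₁ := U ⊔ span (ZMod 2) {f₁}
  have hf₁U₁ : f₁ ∈ U₁ := mem_sup_right (mem_span_singleton_self f₁)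
  have he₀U₁ : e₀ ∈ U₁ := mem_sup_span_singleton_iff.2 (.inr hefU)
  have hg₁U₁ : g₁ ∈ U₁ := mem_sup_span_singleton_iff.2 (.inr (add_comm f₁ g₁ ▸ hfgU))
  have he₁U₁ : e₁ ∉ U₁ := by
    rw [mem_sup_span_singleton_iff, not_or]
    refine ⟨he₁U, fun hmem => he₂U ?_⟩
    convert add_mem hmem hefU using 1
    grind [h.add_e, ZModModule.add_self e₁, ZModModule.add_self f₁]
  have hgrow₁ : (S.filter (· ∈ U)).card + 3 ≤ (S.filter (· ∈ U₁)).card := by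
    have hcard : ({e₀, f₁, g₁} : Finset Q).card = 3 := by grind [h.f₁_ne, h.g₁_ne]
    rw [← hcard]
    exact card_filter_add_card_le_card_filter_sup (by grind [h.mem_e₀, h.mem_f₁, h.mem_g₁]) hfU
      (by simp [hefU, add_comm g₁, hfgU, ZModModule.add_self])
  have hgrow₂ : (S.filter (· ∈ U₁)).card + 4 ≤
      (S.filter (· ∈ U₁ ⊔ span (ZMod 2) {e₁})).card := by
    have hfg₀ : f₁ + g₁ ≠ e₀ := fun heq => hfU ((U.add_mem_iff_right (heq ▸ hfgU)).1 hefU)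
    rw [← hS.card_eq_four_of_isBranching h hfg₀]
    refine card_filter_add_card_le_card_filter_sup
      (by grind [h.mem_e₁, h.mem_e₂, h.mem_f₂, h.mem_g₂]) he₁U₁ ?_
    have hf₂ : f₂ + e₁ = f₁ := by grind [h.add_f, ZModModule.add_self f₂]
    have hg₂ : g₂ + e₁ = e₀ + g₁ := by grind [h.add_e, h.add_g, ZModModule.add_self g₁]
    simp [ZModModule.add_self, add_comm e₂, h.add_e, hf₂, hg₂, he₀U₁, hf₁U₁, add_mem he₀U₁ hg₁U₁]
  have hbound := hS.card_filter_add_three_le (U₁ ⊔ span (ZMod 2) {e₁})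
    (two_le_finrank_of_mem_of_mem (mem_sup_left he₀U₁) (mem_sup_left hf₁U₁)
      (hS.ne_zero h.mem_e₀) (hS.ne_zero h.mem_f₁) h.f₁_ne.symm)
  have : finrank (ZMod 2) U₁ ≤ _ := finrank_sup_span_singleton_le U f₁
  have := finrank_sup_span_singleton_le U₁ e₁
  omega

theorem card_filter_add_four_le (hS : IsSparse S) (h : IsBranching S e₀ e₁ e₂ f₁ f₂ g₁ g₂)
    (hfg : f₁ ≠ g₁) (hfgU : f₁ + g₁ ∈ U) (hefU : e₀ + f₁ ∈ U) (hfU : f₁ ∉ U) :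
    (S.filter (· ∈ U)).card + 4 ≤ 3 * finrank (ZMod 2) U := by
  by_cases he₁U : e₁ ∈ U
  · exact hS.card_filter_add_four_le_of_mem h hfg hfgU hefU hfU he₁U
  by_cases he₂U : e₂ ∈ U
  · have hegU : e₀ + g₁ ∈ U := by
      convert add_mem hefU hfgU using 1
      rw [add_assoc, ← add_assoc f₁, ZModModule.add_self, zero_add]
    exact hS.card_filter_add_four_le_of_mem h.swap hfg.symm (add_comm f₁ g₁ ▸ hfgU) hegU
      (fun hgU => hfU ((U.add_mem_iff_left hgU).1 hfgU)) he₂U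
  · exact hS.card_filter_add_four_le_of_notMem h hfg hfgU hefU hfU he₁U he₂U

theorem card_filter_insert_erase_add_le (hS : IsSparse S)
    (h : IsBranching S e₀ e₁ e₂ f₁ f₂ g₁ g₂) (hfg : f₁ ≠ g₁) (hfgS : f₁ + g₁ ∉ S)
    (hfgU : f₁ + g₁ ∈ U) :
    ((insert (e₀ + f₁) (S.erase g₁)).filter (· ∈ U)).card +
      3 * finrank (ZMod 2) (span (ZMod 2) {f₁ + g₁}) ≤ 3 * finrank (ZMod 2) U := by
  have hle := hS.card_filter_add_le hfgS hfgU
  rw [Finset.filter_insert, Finset.filter_erase]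
  have herase := Finset.card_erase_le (s := S.filter (· ∈ U)) (a := g₁)
  split_ifs with hefU
  · have hinsert := Finset.card_insert_le (e₀ + f₁) ((S.filter (· ∈ U)).erase g₁)
    by_cases hfU : f₁ ∈ U
    · have hgU : g₁ ∈ S.filter (· ∈ U) :=
        Finset.mem_filter.2 ⟨h.mem_g₁, (U.add_mem_iff_right hfU).1 hfgU⟩
      have := Finset.card_erase_add_one hgU
      omega
    · have := hS.card_filter_add_four_le h hfg hfgU hefU hfU
      have : finrank (ZMod 2) (span (ZMod 2) {f₁ + g₁}) ≤ 1 := by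
        simpa using finrank_span_le_card (R := ZMod 2) {f₁ + g₁}
      omega
  · omega

theorem exists_linearMap_insert (hS : IsSparse S) (hv : v ≠ 0) :
    ∃ θ : Q →ₗ[ZMod 2] Fin 3 → ZMod 2, ∀ x ∈ insert v S, θ x ≠ 0 := by
  obtain ⟨θ, -, hθ⟩ := exists_linearMap_pi_apply_eq_zero_and_apply_ne_zero (K := ZMod 2)
    (ι := Fin 3) (insert v S) 0 fun U _ => by
      rw [span_zero_singleton, finrank_bot, Fintype.card_fin, Finset.filter_insert]
      have hle := hS.card_filter_add_le hS.zero_notMem U.zero_mem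
      rw [span_zero_singleton, finrank_bot] at hle
      split_ifs with hvU
      · have hinsert := Finset.card_insert_le v (S.filter (· ∈ U))
        have hpos : 1 ≤ finrank (ZMod 2) U :=
          one_le_finrank_iff.2 ((Submodule.ne_bot_iff U).2 ⟨v, hvU, hv⟩)
        obtain hU | hU := le_or_gt 2 (finrank (ZMod 2) U)
        · have := hS.card_filter_add_three_le U hU
          omega
        · have := hS.card_filter_le_one (U := U) (by omega)
          omega
      · omega
  exact ⟨θ, hθ⟩

theorem exists_linearMap_apply_eq_of_notMem (hS : IsSparse S)
    (h : IsBranching S e₀ e₁ e₂ f₁ f₂ g₁ g₂) (hfg : f₁ + g₁ ∉ S) :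
    ∃ θ : Q →ₗ[ZMod 2] Fin 3 → ZMod 2, (∀ x ∈ S, θ x ≠ 0) ∧ θ f₁ = θ g₁ ∧ θ f₁ ≠ θ e₀ := by
  have hne {θ : Q →ₗ[ZMod 2] Fin 3 → ZMod 2} (hθ : θ (e₀ + f₁) ≠ 0) : θ f₁ ≠ θ e₀ := by
    rintro heq
    rw [map_add, heq, ZModModule.add_self] at hθ
    exact hθ rfl
  obtain rfl | hfg_ne := eq_or_ne f₁ g₁
  · have hef : e₀ + f₁ ≠ 0 := by
      rw [Ne, add_eq_zero_iff_eq_neg, ZModModule.neg_eq_self]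
      exact h.f₁_ne.symm
    obtain ⟨θ, hθ⟩ := hS.exists_linearMap_insert hef
    rw [Finset.forall_mem_insert] at hθ
    exact ⟨θ, hθ.2, rfl, hne hθ.1⟩
  · obtain ⟨θ, hzero, hθ⟩ := exists_linearMap_pi_apply_eq_zero_and_apply_ne_zero (ι := Fin 3)
      (insert (e₀ + f₁) (S.erase g₁)) (f₁ + g₁) fun _ hfgU => by
        simpa only [Fintype.card_fin] using hS.card_filter_insert_erase_add_le h hfg_ne hfg hfgU
    rw [map_add, add_eq_zero_iff_eq_neg, ZModModule.neg_eq_self] at hzero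
    rw [Finset.forall_mem_insert] at hθ
    have hf : θ f₁ ≠ 0 := hθ.2 f₁ (Finset.mem_erase.2 ⟨hfg_ne, h.mem_f₁⟩)
    refine ⟨θ, fun x hx => ?_, hzero, hne hθ.1⟩
    obtain rfl | hxg := eq_or_ne x g₁
    · exact hzero ▸ hf
    · exact hθ.2 x (Finset.mem_erase.2 ⟨hxg, hx⟩)

theorem exists_linearMap_apply_eq_of_isBranching (hS : IsSparse S)
    (h : IsBranching S e₀ e₁ e₂ f₁ f₂ g₁ g₂) :
    ∃ θ : Q →ₗ[ZMod 2] Fin 3 → ZMod 2, (∀ x ∈ S, θ x ≠ 0) ∧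
      ∃ v, v ≠ θ e₀ ∧ (v = θ f₁ ∨ v = θ f₂) ∧ (v = θ g₁ ∨ v = θ g₂) := by
  have hnot : f₁ + g₁ ∉ S ∨ f₁ + g₂ ∉ S ∨ f₂ + g₁ ∉ S ∨ f₂ + g₂ ∉ S := by
    by_contra! hall
    have hf : e₁ + (f₁ + g₁) = f₂ + g₁ := by grind [h.add_f, ZModModule.add_self f₁]
    have hg : e₂ + (f₁ + g₁) = f₁ + g₂ := by grind [h.add_g, ZModModule.add_self g₁]
    have hfg : e₁ + e₂ + (f₁ + g₁) = f₂ + g₂ := by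
      grind [h.add_f, h.add_g, ZModModule.add_self f₁, ZModModule.add_self g₁]
    refine hS.not_fano_subset e₁ e₂ (f₁ + g₁) fun x hx => ?_
    rw [hfg, hf, hg, h.add_e] at hx
    simp only [Finset.mem_insert, Finset.mem_singleton] at hx
    rcases hx with rfl | rfl | rfl | rfl | rfl | rfl | rfl
    exacts [h.mem_e₁, h.mem_e₂, hall.1, h.mem_e₀, hall.2.2.1, hall.2.1, hall.2.2.2]
  rcases hnot with hnot | hnot | hnot | hnot
  · obtain ⟨θ, hθ, heq, hne⟩ := hS.exists_linearMap_apply_eq_of_notMem h hnot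
    exact ⟨θ, hθ, θ f₁, hne, .inl rfl, .inl heq⟩
  · obtain ⟨θ, hθ, heq, hne⟩ := hS.exists_linearMap_apply_eq_of_notMem h.swap_g hnot
    exact ⟨θ, hθ, θ f₁, hne, .inl rfl, .inr heq⟩
  · obtain ⟨θ, hθ, heq, hne⟩ := hS.exists_linearMap_apply_eq_of_notMem h.swap_f hnot
    exact ⟨θ, hθ, θ f₂, hne, .inr rfl, .inl heq⟩
  · obtain ⟨θ, hθ, heq, hne⟩ := hS.exists_linearMap_apply_eq_of_notMem h.swap_f.swap_g hnot
    exact ⟨θ, hθ, θ f₂, hne, .inr rfl, .inr heq⟩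

end IsSparse

end Sparse

section Cuts

open Module Submodule

variable {V E : Type*}

/-- The coboundary of a potential on the vertices of the multigraph whose edge `e` has the
endpoints `ends e`. Its values are the characteristic vectors of the edge cuts. -/
def coboundary (ends : E → Sym2 V) : (V → ZMod 2) →ₗ[ZMod 2] E → ZMod 2 where
  toFun f e := Sym2.lift ⟨fun x y => f x + f y, fun x y => add_comm (f x) (f y)⟩ (ends e)
  map_add' f g := funext fun e => by
    induction h : ends e with | _ x y => simp only [h, Sym2.lift_mk, Pi.add_apply]; abel
  map_smul' a f := funext fun e => by
    induction h : ends e with | _ x y => simp [h, mul_add]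

variable {ends : E → Sym2 V} {e : E} {x y : V}

theorem coboundary_apply (h : ends e = s(x, y)) (f : V → ZMod 2) :
    coboundary ends f e = f x + f y := by
  simp [coboundary, h]

theorem coboundary_eq_zero_iff (h : ends e = s(x, y)) {f : V → ZMod 2} :
    coboundary ends f e = 0 ↔ f x = f y := by
  rw [coboundary_apply h, add_eq_zero_iff_eq_neg, ZModModule.neg_eq_self]

theorem coboundary_map {W : Type*} (π : V → W) (ends : E → Sym2 V) (f : W → ZMod 2) :
    coboundary (fun e => (ends e).map π) f = coboundary ends (f ∘ π) :=
  funext fun e => by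
    induction h : ends e with
    | _ x y =>
      rw [coboundary_apply h, coboundary_apply (x := π x) (y := π y) (by rw [h, Sym2.map_mk])]
      rfl

theorem coboundary_one (ends : E → Sym2 V) : coboundary ends 1 = 0 :=
  funext fun e => by
    induction h : ends e with | _ x y => exact (coboundary_eq_zero_iff h).2 rfl

section VertexCuts

variable [DecidableEq V]

theorem sum_coboundary_single [Fintype V] (ends : E → Sym2 V) :
    ∑ x, coboundary ends (Pi.single x 1) = 0 := by
  rw [← map_sum, ← coboundary_one ends]
  exact congrArg _ (Finset.univ_sum_single (1 : V → ZMod 2))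

theorem range_coboundary_eq_span [Finite V] (ends : E → Sym2 V) :
    LinearMap.range (coboundary ends) =
      span (ZMod 2) (Set.range fun x => coboundary ends (Pi.single x 1)) := by
  rw [LinearMap.range_eq_map, ← (Pi.basisFun (ZMod 2) V).span_eq, map_span, ← Set.range_comp]
  simp [Function.comp_def]

theorem card_filter_coboundary_single_ne_zero_le_two [Fintype V] (ends : E → Sym2 V) (e : E) :
    (Finset.univ.filter fun x => coboundary ends (Pi.single x 1) e ≠ 0).card ≤ 2 := by
  induction h : ends e with
  | _ a b =>
    refine (Finset.card_le_card fun x hx => ?_).trans (Finset.card_le_two (a := a) (b := b))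
    by_contra hab
    simp only [Finset.mem_insert, Finset.mem_singleton, not_or] at hab
    exact (Finset.mem_filter.1 hx).2 (by simp [coboundary_apply h, Ne.symm hab.1, Ne.symm hab.2])

end VertexCuts

open scoped Classical in
theorem finrank_span_range_add_one_le_card {M ι : Type*} [AddCommGroup M] [Module (ZMod 2) M]
    [Fintype ι] {D : ι → M} (hsum : ∑ i, D i = 0) (hD : D ≠ 0) :
    finrank (ZMod 2) (span (ZMod 2) (Set.range D)) + 1 ≤
      (Finset.univ.filter fun i => D i ≠ 0).card := by
  obtain ⟨i₀, hi₀⟩ := Function.ne_iff.1 hD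
  set I := Finset.univ.filter fun i => D i ≠ 0
  have hi₀I : i₀ ∈ I := by simpa [I] using hi₀
  have hmem : ∀ i ∈ I.erase i₀, D i ∈ span (ZMod 2) ((I.erase i₀).image D : Set M) :=
    fun i hi => subset_span (by exact_mod_cast Finset.mem_image_of_mem D hi)
  have hspan : span (ZMod 2) (Set.range D) ≤ span (ZMod 2) ((I.erase i₀).image D : Set M) := by
    rw [span_le]
    rintro _ ⟨i, rfl⟩
    obtain rfl | hi := eq_or_ne i i₀
    · rw [← Finset.sum_filter_ne_zero, ← Finset.add_sum_erase _ _ hi₀I, add_eq_zero_iff_eq_neg,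
        ZModModule.neg_eq_self] at hsum
      rw [hsum]
      exact sum_mem hmem
    · by_cases hDi : D i = 0
      · rw [hDi]; exact zero_mem _
      · exact hmem i (by simp [I, hi, hDi])
  calc finrank (ZMod 2) (span (ZMod 2) (Set.range D)) + 1
      ≤ (I.erase i₀).card + 1 := by
        gcongr
        exact (finrank_mono hspan).trans
          ((finrank_span_finset_le_card _).trans Finset.card_image_le)
    _ = I.card := Finset.card_erase_add_one hi₀I

open scoped Classical in
theorem three_mul_finrank_range_coboundary_add_one_le [Finite V] [Fintype E] (ends : E → Sym2 V)
    (hcut : ∀ f, coboundary ends f ≠ 0 →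
      3 ≤ (Finset.univ.filter fun e => coboundary ends f e ≠ 0).card)
    (hne : coboundary ends ≠ 0) :
    3 * (finrank (ZMod 2) (LinearMap.range (coboundary ends)) + 1) ≤ 2 * Fintype.card E := by
  cases nonempty_fintype V
  let D : V → E → ZMod 2 := fun x => coboundary ends (Pi.single x 1)
  have hD : D ≠ 0 := fun hD => hne <| by
    rw [← LinearMap.range_eq_bot, range_coboundary_eq_span, span_eq_bot]
    rintro _ ⟨x, rfl⟩
    exact congrFun hD x
  calc 3 * (finrank (ZMod 2) (LinearMap.range (coboundary ends)) + 1)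
      ≤ 3 * (Finset.univ.filter fun x => D x ≠ 0).card := by
        rw [range_coboundary_eq_span]
        gcongr
        convert! finrank_span_range_add_one_le_card (sum_coboundary_single ends) hD
    _ ≤ ∑ x with D x ≠ 0, (Finset.univ.filter fun e => D x e ≠ 0).card := by
        rw [mul_comm, ← smul_eq_mul]
        exact Finset.card_nsmul_le_sum _ _ _ fun x hx => hcut _ (Finset.mem_filter.1 hx).2
    _ ≤ ∑ x, (Finset.univ.filter fun e => D x e ≠ 0).card :=
        Finset.sum_le_sum_of_subset (Finset.filter_subset _ _)
    _ = ∑ e, (Finset.univ.filter fun x => D x e ≠ 0).card :=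
        Finset.sum_card_bipartiteAbove_eq_sum_card_bipartiteBelow _
    _ ≤ ∑ _e : E, 2 :=
        Finset.sum_le_sum fun e _ => card_filter_coboundary_single_ne_zero_le_two ends e
    _ = 2 * Fintype.card E := by simp [mul_comm]

/-- The edge vectors of a multigraph modulo its cuts. The linear maps from this space to `M` are
the `M`-valued flows of the multigraph. -/
abbrev EdgeClass (ends : E → Sym2 V) : Type _ :=
  (E → ZMod 2) ⧸ LinearMap.range (coboundary ends)

/-- The class of an edge modulo cuts. It vanishes exactly when the edge is a bridge. -/
def edgeClass [DecidableEq E] (ends : E → Sym2 V) (e : E) : EdgeClass ends :=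
  Submodule.Quotient.mk (Pi.single e 1)

section EdgeClass

variable [DecidableEq E]

theorem edgeClass_eq_zero_iff :
    edgeClass ends e = 0 ↔ ∃ f, coboundary ends f = Pi.single e 1 := by
  rw [edgeClass, Quotient.mk_eq_zero, LinearMap.mem_range]

theorem edgeClass_eq_edgeClass_iff {e' : E} :
    edgeClass ends e = edgeClass ends e' ↔
      ∃ f, coboundary ends f = Pi.single e 1 + Pi.single e' 1 := by
  rw [edgeClass, edgeClass, Submodule.Quotient.eq, LinearMap.mem_range, ZModModule.sub_eq_add]

theorem edgeClass_add_add_eq_zero {a b c : E} {f : V → ZMod 2}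
    (hf : coboundary ends f = Pi.single a 1 + Pi.single b 1 + Pi.single c 1) :
    edgeClass ends a + edgeClass ends b + edgeClass ends c = 0 := by
  simp only [edgeClass, ← Submodule.Quotient.mk_add]
  exact (Quotient.mk_eq_zero _).2 ⟨f, hf⟩

theorem three_le_card_of_sum_edgeClass_eq_zero (hne : ∀ e, edgeClass ends e ≠ 0)
    {B : Finset E} (hinj : Set.InjOn (edgeClass ends) B) (hB : B.Nonempty)
    (hsum : ∑ e ∈ B, edgeClass ends e = 0) : 3 ≤ B.card := by
  have h₁ : B.card ≠ 1 := fun h => by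
    obtain ⟨e, rfl⟩ := Finset.card_eq_one.1 h
    exact hne e (by simpa using hsum)
  have h₂ : B.card ≠ 2 := fun h => by
    obtain ⟨e, e', hee', rfl⟩ := Finset.card_eq_two.1 h
    rw [Finset.sum_pair hee', add_eq_zero_iff_eq_neg, ZModModule.neg_eq_self] at hsum
    exact hee' (hinj (by simp) (by simp) hsum)
  have := hB.card_pos
  omega

variable [Fintype E]

theorem sum_smul_edgeClass (h : E → ZMod 2) :
    ∑ e, h e • edgeClass ends e = Submodule.Quotient.mk h := by
  simp_rw [edgeClass, ← Quotient.mk_smul, ← mkQ_apply, ← map_sum]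
  simp [← Pi.single_smul, Finset.univ_sum_single]

theorem sum_coboundary_smul_edgeClass (f : V → ZMod 2) :
    ∑ e, coboundary ends f e • edgeClass ends e = 0 := by
  rw [sum_smul_edgeClass, Quotient.mk_eq_zero]
  exact LinearMap.mem_range_self _ f

theorem sum_edgeClass_of_coboundary_ne_zero (f : V → ZMod 2) :
    ∑ e with coboundary ends f e ≠ 0, edgeClass ends e = 0 := by
  rw [← sum_coboundary_smul_edgeClass f, Finset.sum_filter]
  refine Finset.sum_congr rfl fun e _ => ?_
  obtain h | h := (by decide : ∀ a : ZMod 2, a = 0 ∨ a = 1) (coboundary ends f e) <;> simp [h]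

end EdgeClass

section Contract

variable {A : Finset E}

/-- The endpoints of the edges in `A` after contraction of all other edges. A vertex of the
contraction is represented by the values at it of all potentials that are constant along the edges
outside `A`. -/
def contractEnds (ends : E → Sym2 V) (A : Finset E) (e : A) :
    Sym2 ({f : V → ZMod 2 // ∀ e ∉ A, coboundary ends f e = 0} → ZMod 2) :=
  (ends e).map fun x f => f.1 x

theorem coboundary_contractEnds
    (g : ({f : V → ZMod 2 // ∀ e ∉ A, coboundary ends f e = 0} → ZMod 2) → ZMod 2) (e : A) :
    coboundary (contractEnds ends A) g e = coboundary ends (fun x => g fun f => f.1 x) e :=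
  (congrFun (coboundary_map _ (fun e : A => ends e) g) e).trans rfl

theorem coboundary_eq_zero_of_notMem
    (g : ({f : V → ZMod 2 // ∀ e ∉ A, coboundary ends f e = 0} → ZMod 2) → ZMod 2) (he : e ∉ A) :
    coboundary ends (fun x => g fun f => f.1 x) e = 0 := by
  induction h : ends e with
  | _ x y =>
    refine (coboundary_eq_zero_iff h).2 (congrArg g (funext fun f => ?_))
    exact (coboundary_eq_zero_iff h).1 (f.2 e he)

variable [DecidableEq E]

theorem three_le_card_filter_coboundary_contractEnds [Finite E] (hne : ∀ e, edgeClass ends e ≠ 0)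
    (hinj : Set.InjOn (edgeClass ends) A)
    {g : ({f : V → ZMod 2 // ∀ e ∉ A, coboundary ends f e = 0} → ZMod 2) → ZMod 2}
    (hg : coboundary (contractEnds ends A) g ≠ 0) :
    3 ≤ (Finset.univ.filter fun e => coboundary (contractEnds ends A) g e ≠ 0).card := by
  cases nonempty_fintype E
  let B := Finset.univ.filter fun e => coboundary ends (fun x => g fun f => f.1 x) e ≠ 0
  have hBA : ∀ e ∈ B, e ∈ A := fun e he => by
    by_contra heA
    exact (Finset.mem_filter.1 he).2 (coboundary_eq_zero_of_notMem g heA)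
  have hcard : B.card =
      (Finset.univ.filter fun e => coboundary (contractEnds ends A) g e ≠ 0).card := by
    simp_rw [coboundary_contractEnds]
    rw [← Finset.card_map (Function.Embedding.subtype (· ∈ A))]
    congr 1
    ext e
    simpa [B] using fun he => hBA e (by simpa [B] using he)
  obtain ⟨e, he⟩ := Function.ne_iff.1 hg
  rw [coboundary_contractEnds] at he
  rw [← hcard]
  exact three_le_card_of_sum_edgeClass_eq_zero hne
    (hinj.mono hBA) ⟨e, by simpa [B] using he⟩ (sum_edgeClass_of_coboundary_ne_zero _)

theorem ker_linearCombination_edgeClass_le [Finite E] :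
    LinearMap.ker (Fintype.linearCombination (ZMod 2) fun e : A => edgeClass ends e) ≤
      LinearMap.range (coboundary (contractEnds ends A)) := by
  cases nonempty_fintype E
  intro h hh
  let h' : E → ZMod 2 := fun e => if he : e ∈ A then h ⟨e, he⟩ else 0
  have hsum : ∑ e, h' e • edgeClass ends e = 0 := by
    rw [← hh, Fintype.linearCombination_apply,
      ← Finset.sum_subset (Finset.subset_univ A) (by simp +contextual [h']), ← Finset.sum_coe_sort]
    simp [h']
  rw [sum_smul_edgeClass, Quotient.mk_eq_zero] at hsum
  obtain ⟨f, hf⟩ := hsum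
  have hfA : ∀ e ∉ A, coboundary ends f e = 0 := fun e he => by simp [hf, h', he]
  refine ⟨fun v => v ⟨f, hfA⟩, funext fun e => ?_⟩
  rw [coboundary_contractEnds, hf]
  simp [h']

variable [Finite V]

theorem card_add_three_le_of_injOn_edgeClass [Finite E] (hne : ∀ e, edgeClass ends e ≠ 0)
    (hinj : Set.InjOn (edgeClass ends) A) {U : Submodule (ZMod 2) (EdgeClass ends)}
    (hAU : ∀ e ∈ A, edgeClass ends e ∈ U) (hU : 2 ≤ finrank (ZMod 2) U) :
    A.card + 3 ≤ 3 * finrank (ZMod 2) U := by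
  let L := Fintype.linearCombination (ZMod 2) fun e : A => edgeClass ends e
  have hrank := L.finrank_range_add_finrank_ker
  have hrange : finrank (ZMod 2) (LinearMap.range L) ≤ finrank (ZMod 2) U := finrank_mono <| by
    rintro _ ⟨h, rfl⟩
    exact sum_mem fun e _ => U.smul_mem _ (hAU e e.2)
  have hker : finrank (ZMod 2) (LinearMap.ker L) ≤ _ :=
    finrank_mono ker_linearCombination_edgeClass_le
  rw [finrank_fintype_fun_eq_card, Fintype.card_coe] at hrank
  by_cases hcut : coboundary (contractEnds ends A) = 0
  · rw [hcut, LinearMap.range_zero, finrank_bot] at hker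
    omega
  · have := three_mul_finrank_range_coboundary_add_one_le _
      (fun g hg => three_le_card_filter_coboundary_contractEnds hne hinj hg) hcut
    rw [Fintype.card_coe] at this
    omega

open scoped Classical in
theorem isSparse_image_edgeClass [Fintype E] (hne : ∀ e, edgeClass ends e ≠ 0) :
    IsSparse (Finset.univ.image (edgeClass ends)) where
  zero_notMem h := by
    obtain ⟨e, -, he⟩ := Finset.mem_image.1 h
    exact hne e he
  card_filter_add_three_le U hU := by
    obtain ⟨A, -, hinj, himage⟩ := Finset.exists_subset_injOn_image_eq_of_surjOn
      (f := edgeClass ends) Set.univ ((Finset.univ.image (edgeClass ends)).filter (· ∈ U))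
      fun x hx => by simpa using (Finset.mem_filter.1 hx).1
    rw [← himage, Finset.card_image_of_injOn hinj]
    refine card_add_three_le_of_injOn_edgeClass hne hinj (fun e he => ?_) hU
    have := himage ▸ Finset.mem_image_of_mem _ he
    exact (Finset.mem_filter.1 this).2

end Contract

end Cuts

section Claws

variable {V : Type*} {G : SimpleGraph V} {x a b c : V}

/-- The vertex `x` of `G` has exactly the three distinct neighbours `a`, `b` and `c`. -/
structure IsClaw (G : SimpleGraph V) (x a b c : V) : Prop where
  ne₁₂ : a ≠ b
  ne₁₃ : a ≠ c
  ne₂₃ : b ≠ c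
  adj_iff : ∀ y, G.Adj x y ↔ y = a ∨ y = b ∨ y = c

theorem exists_isClaw_of_ncard_neighborSet (h : (G.neighborSet x).ncard = 3) :
    ∃ a b c, IsClaw G x a b c := by
  obtain ⟨a, b, c, hab, hac, hbc, hN⟩ := Set.ncard_eq_three.1 h
  exact ⟨a, b, c, hab, hac, hbc, fun y => by rw [← mem_neighborSet, hN]; simp⟩

namespace IsClaw

theorem swap₂₃ (h : IsClaw G x a b c) : IsClaw G x a c b :=
  ⟨h.ne₁₃, h.ne₁₂, h.ne₂₃.symm, fun y => by rw [h.adj_iff, or_comm (a := y = b)]⟩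

theorem rotate (h : IsClaw G x a b c) : IsClaw G x b c a :=
  ⟨h.ne₂₃, h.ne₁₂.symm, h.ne₁₃.symm, fun y => by rw [h.adj_iff, or_comm, or_assoc]⟩

theorem adj₁ (h : IsClaw G x a b c) : G.Adj x a := (h.adj_iff a).2 (.inl rfl)

theorem adj₂ (h : IsClaw G x a b c) : G.Adj x b := h.rotate.adj₁

theorem adj₃ (h : IsClaw G x a b c) : G.Adj x c := h.rotate.rotate.adj₁

theorem exists_of_adj (h : IsClaw G x a b c) {y : V} (hy : G.Adj x y) :
    ∃ z z', IsClaw G x y z z' := by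
  rcases (h.adj_iff y).1 hy with rfl | rfl | rfl
  exacts [⟨_, _, h⟩, ⟨_, _, h.rotate⟩, ⟨_, _, h.rotate.rotate⟩]

theorem exists_of_adj_of_ne (h : IsClaw G x a b c) {y : V} (hy : G.Adj x y) (hya : y ≠ a) :
    ∃ z, IsClaw G x a y z := by
  rcases (h.adj_iff y).1 hy with rfl | rfl | rfl
  exacts [absurd rfl hya, ⟨c, h⟩, ⟨b, h.swap₂₃⟩]

theorem ncard_neighborSet (h : IsClaw G x a b c) : (G.neighborSet x).ncard = 3 :=
  Set.ncard_eq_three.2 ⟨a, b, c, h.ne₁₂, h.ne₁₃, h.ne₂₃, Set.ext h.adj_iff⟩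

end IsClaw

end Claws

section GraphCuts

open scoped Classical

variable {V : Type*} {G : SimpleGraph V} {x y a b c : V} {f : V → ZMod 2} {e : G.edgeSet}

/-- The cut of a simple graph described by a potential on its vertices. -/
abbrev cut (G : SimpleGraph V) : (V → ZMod 2) →ₗ[ZMod 2] G.edgeSet → ZMod 2 :=
  coboundary Subtype.val

theorem cut_apply (h : G.Adj x y) : cut G f ⟨s(x, y), h⟩ = f x + f y :=
  coboundary_apply rfl f

theorem cut_eq_zero_iff (h : G.Adj x y) : cut G f ⟨s(x, y), h⟩ = 0 ↔ f x = f y :=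
  coboundary_eq_zero_iff rfl

theorem cut_single_of_isClaw (h : IsClaw G x a b c) :
    cut G (Pi.single x 1) = Pi.single ⟨s(x, a), h.adj₁⟩ 1 + Pi.single ⟨s(x, b), h.adj₂⟩ 1 +
      Pi.single ⟨s(x, c), h.adj₃⟩ 1 := by
  funext ⟨e, he⟩
  by_cases hxe : x ∈ e
  · obtain ⟨z, rfl⟩ := Sym2.mem_iff_exists.1 hxe
    have hzx : z ≠ x := (G.ne_of_adj he).symm
    rw [cut_apply he]
    rcases (h.adj_iff z).1 he with rfl | rfl | rfl <;>
      simp [Subtype.ext_iff, hzx, h.ne₁₂, h.ne₁₃, h.ne₂₃,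
        h.ne₁₂.symm, h.ne₁₃.symm, h.ne₂₃.symm]
  · have hne : ∀ z (hz : G.Adj x z), (⟨e, he⟩ : G.edgeSet) ≠ ⟨s(x, z), hz⟩ := by
      rintro z hz ⟨⟩
      exact hxe (Sym2.mem_mk_left x z)
    simp only [Pi.add_apply, Pi.single_eq_of_ne (hne _ _), add_zero]
    induction e with
    | _ y z =>
      rw [Sym2.mem_iff, not_or] at hxe
      simp [cut_apply he, Ne.symm hxe.1, Ne.symm hxe.2]

theorem apply_eq_of_reachable_deleteEdges (hf : ∀ g, g ≠ e → cut G f g = 0)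
    (h : (G.deleteEdges {e.1}).Reachable x y) : f x = f y := by
  obtain ⟨p⟩ := h
  induction p with
  | nil => rfl
  | cons hadj _ ih =>
    rw [deleteEdges_adj] at hadj
    refine Eq.trans ?_ ih
    exact (cut_eq_zero_iff hadj.1).1 (hf _ fun h => hadj.2 (congrArg Subtype.val h))

theorem edgeClass_ne_zero_of_not_isBridge (he : ¬ G.IsBridge e) :
    edgeClass (Subtype.val : G.edgeSet → Sym2 V) e ≠ 0 := by
  rw [Ne, edgeClass_eq_zero_iff]
  rintro ⟨f, hf⟩
  obtain ⟨⟨e, hmem⟩, rfl⟩ : ∃ e', e' = e := ⟨e, rfl⟩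
  induction e with
  | _ x y =>
    have hxy : f x = f y := apply_eq_of_reachable_deleteEdges (e := ⟨s(x, y), hmem⟩)
      (fun g hg => by simp [cut, hf, Pi.single_eq_of_ne hg]) (by simpa [IsBridge] using he)
    have hcut := congrFun hf ⟨s(x, y), hmem⟩
    rw [cut_apply hmem, hxy, ZModModule.add_self, Pi.single_eq_same] at hcut
    exact zero_ne_one hcut

theorem cut_reachable_of_isBridge (h : G.Adj x y) (hbridge : G.IsBridge s(x, y)) :
    cut G (fun z => if (G.deleteEdges {s(x, y)}).Reachable x z then 1 else 0) =
      Pi.single ⟨s(x, y), h⟩ 1 := by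
  funext ⟨e, he⟩
  obtain rfl | hne := eq_or_ne e s(x, y)
  · rw [cut_apply h, Pi.single_eq_same, if_neg (isBridge_iff.1 hbridge), if_pos (Reachable.refl x),
      add_zero]
  · rw [Pi.single_eq_of_ne fun hsub => hne (congrArg Subtype.val hsub)]
    induction e with
    | _ z z' =>
      have hzz' : (G.deleteEdges {s(x, y)}).Reachable z z' :=
        (deleteEdges_adj.2 ⟨he, hne⟩).reachable
      have hiff : (G.deleteEdges {s(x, y)}).Reachable x z ↔
          (G.deleteEdges {s(x, y)}).Reachable x z' :=
        ⟨fun hz => hz.trans hzz', fun hz' => hz'.trans hzz'.symm⟩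
      rw [cut_apply he, if_congr hiff rfl rfl, ZModModule.add_self]

end GraphCuts

section TwoCuts

open scoped Classical

variable {V : Type*} {G : SimpleGraph V} {s t : V}

/-- `G` is cubic except for the leaf `t`, whose only neighbour is `s`, and no edge of `G` other than
`st` is a bridge. -/
structure IsPendantCubic (G : SimpleGraph V) (s t : V) : Prop where
  adj_iff : ∀ y, G.Adj t y ↔ y = s
  ncard_neighborSet : ∀ x, x ≠ t → (G.neighborSet x).ncard = 3
  not_isBridge : ∀ e ∈ G.edgeSet, e ≠ s(s, t) → ¬ G.IsBridge e

/-- The potential `f` describes a cut consisting of the two edges `e` and `e'`, one side of which,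
the support of `f`, avoids `s` and `t` and is contained in the component of `s`. -/
structure IsTwoCut (G : SimpleGraph V) (s t : V) (f : V → ZMod 2) (e e' : G.edgeSet) : Prop where
  apply_s : f s = 0
  apply_t : f t = 0
  reachable : ∀ x, f x ≠ 0 → (G.deleteEdges {s(s, t)}).Reachable s x
  ne : e ≠ e'
  cut_eq : cut G f = Pi.single e 1 + Pi.single e' 1

/-- A two-edge cut whose side avoiding `s` and `t` is minimal under inclusion. -/
structure IsMinTwoCut (G : SimpleGraph V) (s t : V) (f : V → ZMod 2) (e e' : G.edgeSet) : Prop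
    extends IsTwoCut G s t f e e' where
  eq_of_le : ∀ g d d', IsTwoCut G s t g d d' → (∀ x, f x = 0 → g x = 0) → g = f

theorem zmod_two_eq_one_iff_ne_zero {a : ZMod 2} : a = 1 ↔ a ≠ 0 := by
  revert a; decide

namespace IsPendantCubic

theorem adj (h : IsPendantCubic G s t) : G.Adj s t := ((h.adj_iff s).2 rfl).symm

theorem exists_isClaw (h : IsPendantCubic G s t) {x y : V} (hxt : x ≠ t) (hxy : G.Adj x y) :
    ∃ z z', IsClaw G x y z z' := by
  obtain ⟨a, b, c, hx⟩ := exists_isClaw_of_ncard_neighborSet (h.ncard_neighborSet x hxt)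
  exact hx.exists_of_adj hxy

theorem edgeClass_ne_zero (h : IsPendantCubic G s t) (e : G.edgeSet) (he : e.1 ≠ s(s, t)) :
    edgeClass (Subtype.val : G.edgeSet → Sym2 V) e ≠ 0 :=
  edgeClass_ne_zero_of_not_isBridge (h.not_isBridge e e.2 he)

theorem cut_single_leaf (h : IsPendantCubic G s t) :
    cut G (Pi.single t 1) = Pi.single ⟨s(s, t), h.adj⟩ 1 := by
  funext ⟨e, he⟩
  induction e with
  | _ x y =>
    have hxt : x = t → y = s := fun hx => (h.adj_iff y).1 (hx ▸ he)
    have hyt : y = t → x = s := fun hy => (h.adj_iff x).1 (hy ▸ he.symm)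
    have hst := h.adj.ne
    rw [cut_apply he]
    simp only [Pi.single_apply, Subtype.ext_iff, Sym2.eq_iff]
    grind

theorem isBridge (h : IsPendantCubic G s t) : G.IsBridge s(s, t) := fun hst => by
  have := apply_eq_of_reachable_deleteEdges (e := ⟨s(s, t), h.adj⟩) (f := Pi.single t 1)
    (fun g hg => by rw [h.cut_single_leaf, Pi.single_eq_of_ne hg]) hst
  simp [h.adj.ne] at this

theorem exists_isTwoCut (h : IsPendantCubic G s t) : ∃ f e e', IsTwoCut G s t f e e' := by
  obtain ⟨a, b, hs⟩ := h.exists_isClaw h.adj.ne h.adj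
  let f : V → ZMod 2 := fun x => if (G.deleteEdges {s(s, t)}).Reachable s x then 1 else 0
  have hcut : cut G f = Pi.single ⟨s(s, t), h.adj⟩ 1 := cut_reachable_of_isBridge h.adj h.isBridge
  refine ⟨f + Pi.single s 1, ⟨s(s, a), hs.adj₂⟩, ⟨s(s, b), hs.adj₃⟩, ?_, ?_, fun x hx => ?_, ?_, ?_⟩
  · simp [f, ZModModule.add_self]
  · simp [f, isBridge_iff.1 h.isBridge, h.adj.ne.symm]
  · by_contra hsx
    obtain rfl | hxs := eq_or_ne x s
    · exact hsx (Reachable.refl _)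
    · exact hx (by simp [f, hsx, hxs])
  · simp [Subtype.ext_iff, hs.ne₂₃, hs.adj₂.ne']
  · rw [map_add, hcut, cut_single_of_isClaw hs, ← add_assoc, ← add_assoc, ZModModule.add_self,
      zero_add]

theorem exists_isMinTwoCut [Finite V] (h : IsPendantCubic G s t) :
    ∃ f e e', IsMinTwoCut G s t f e e' := by
  obtain ⟨f, ⟨e, e', hf⟩, hmin⟩ := exists_minimalFor_of_wellFoundedLT
    (fun f => ∃ e e', IsTwoCut G s t f e e') Function.support h.exists_isTwoCut
  refine ⟨f, e, e', hf, fun g d d' hg hgf => funext fun x => ?_⟩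
  have hle : Function.support g ≤ Function.support f := fun x hx hfx => hx (hgf x hfx)
  by_cases hx : f x = 0
  · rw [hx, hgf x hx]
  · rw [zmod_two_eq_one_iff_ne_zero.2 hx, zmod_two_eq_one_iff_ne_zero]
    exact hmin ⟨d, d', hg⟩ hle hx

end IsPendantCubic

end TwoCuts

section MinTwoCut

open scoped Classical

variable {V : Type*} {G : SimpleGraph V} {s t p y u u' z z' : V} {f : V → ZMod 2}

namespace IsTwoCut

variable {e e' : G.edgeSet}

theorem cut_left (hf : IsTwoCut G s t f e e') : cut G f e = 1 := by
  simp [hf.cut_eq, hf.ne]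

theorem cut_of_ne (hf : IsTwoCut G s t f e e') {g : G.edgeSet} (he : g ≠ e) (he' : g ≠ e') :
    cut G f g = 0 := by
  simp [hf.cut_eq, he, he']

theorem ne_s (hf : IsTwoCut G s t f e e') (hp : f p = 1) : p ≠ s := fun h => by
  simp [h, hf.apply_s] at hp

theorem ne_t (hf : IsTwoCut G s t f e e') (hp : f p = 1) : p ≠ t := fun h => by
  simp [h, hf.apply_t] at hp

theorem exists_apply_eq (hf : IsTwoCut G s t f e e') :
    ∃ p y, ∃ hpy : G.Adj p y, e = ⟨s(p, y), hpy⟩ ∧ f p = 1 ∧ f y = 0 := by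
  have hcut := hf.cut_left
  obtain ⟨e, he⟩ := e
  induction e with
  | _ x y =>
    rw [cut_apply he] at hcut
    obtain hx | hx := (by decide : ∀ a : ZMod 2, a = 0 ∨ a = 1) (f x)
    · exact ⟨y, x, he.symm, Subtype.ext Sym2.eq_swap, by simpa [hx] using hcut, hx⟩
    · exact ⟨x, y, he, rfl, hx, by simpa [hx] using hcut⟩

theorem apply_eq_one_of_isClaw (h : IsPendantCubic G s t) (hp : IsClaw G p y u u')
    (hf : IsTwoCut G s t f ⟨s(p, y), hp.adj₁⟩ e') (hfp : f p = 1) : f u = 1 := by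
  by_contra hfu
  have hcut : cut G f ⟨s(p, u), hp.adj₂⟩ ≠ 0 := by
    rw [Ne, cut_eq_zero_iff, hfp]
    exact Ne.symm hfu
  have he' : e' = ⟨s(p, u), hp.adj₂⟩ := by
    by_contra he'
    exact hcut (hf.cut_of_ne (by simp [Subtype.ext_iff, hp.ne₁₂.symm, hp.adj₁.ne]) (Ne.symm he'))
  refine h.edgeClass_ne_zero ⟨s(p, u'), hp.adj₃⟩ ?_
    (edgeClass_eq_zero_iff.2 ⟨f + Pi.single p 1, ?_⟩)
  · simp [hf.ne_s hfp, hf.ne_t hfp]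
  · rw [map_add, hf.cut_eq, cut_single_of_isClaw hp, he', ← add_assoc, ZModModule.add_self,
      zero_add]

end IsTwoCut

theorem IsMinTwoCut.ne_of_isClaw {e' : G.edgeSet} (hp : IsClaw G p y u u')
    (hu : IsClaw G u p z z') (hf : IsMinTwoCut G s t f ⟨s(p, y), hp.adj₁⟩ e') (hfp : f p = 1)
    (hfu : f u = 1) : e' ≠ ⟨s(u, z), hu.adj₂⟩ := by
  rintro rfl
  let g := f + Pi.single p 1 + Pi.single u 1
  have hg : ∀ x, f x = 0 → g x = 0 := fun x hx => by
    have hxp : x ≠ p := fun hxp => by simp [hxp, hfp] at hx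
    have hxu : x ≠ u := fun hxu => by simp [hxu, hfu] at hx
    simp [g, hx, hxp, hxu]
  have htwo : IsTwoCut G s t g ⟨s(p, u'), hp.adj₃⟩ ⟨s(u, z'), hu.adj₃⟩ := by
    refine ⟨hg s hf.apply_s, hg t hf.apply_t, fun x hx => hf.reachable x (mt (hg x) hx), ?_, ?_⟩
    · simp [Subtype.ext_iff, hp.adj₂.ne, hp.ne₂₃.symm]
    · have hswap : (⟨s(u, p), hu.adj₁⟩ : G.edgeSet) = ⟨s(p, u), hp.adj₂⟩ :=
        Subtype.ext Sym2.eq_swap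
      simp only [g, map_add]
      rw [hf.cut_eq, cut_single_of_isClaw hp, cut_single_of_isClaw hu, hswap]
      have := ZModModule.add_self (Pi.single ⟨s(p, y), hp.adj₁⟩ 1 : G.edgeSet → ZMod 2)
      have := ZModModule.add_self (Pi.single ⟨s(p, u), hp.adj₂⟩ 1 : G.edgeSet → ZMod 2)
      have := ZModModule.add_self (Pi.single ⟨s(u, z), hu.adj₂⟩ 1 : G.edgeSet → ZMod 2)
      grind
  have := congrFun (hf.eq_of_le g _ _ htwo hg) p
  simp [g, hfp, hp.adj₂.ne] at this

end MinTwoCut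

section Collapse

open scoped Classical

variable {V : Type*} {G : SimpleGraph V} {A : Set V} {a x y b c d : V} {f : V → ZMod 2}
  {e : G.edgeSet}

/-- The map that identifies all vertices of `A` with `a`. -/
noncomputable def collapse (A : Set V) (a x : V) : V := if x ∈ A then a else x

/-- The endpoints of the edges of `G` after identification of all vertices of `A` with `a`. -/
noncomputable def collapseEnds (G : SimpleGraph V) (A : Set V) (a : V) (e : G.edgeSet) : Sym2 V :=
  e.1.map (collapse A a)

theorem coboundary_collapseEnds (f : V → ZMod 2) :
    coboundary (collapseEnds G A a) f = cut G (f ∘ collapse A a) :=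
  coboundary_map _ _ f

theorem coboundary_collapseEnds_of_forall_eq (hf : ∀ x ∈ A, f x = f a) :
    coboundary (collapseEnds G A a) f = cut G f := by
  rw [coboundary_collapseEnds]
  congr 1
  funext x
  rw [Function.comp_apply, collapse]
  split_ifs with hx
  exacts [(hf x hx).symm, rfl]

theorem edgeClass_collapseEnds_ne_zero
    (he : edgeClass (Subtype.val : G.edgeSet → Sym2 V) e ≠ 0) :
    edgeClass (collapseEnds G A a) e ≠ 0 := by
  rw [Ne, edgeClass_eq_zero_iff] at he ⊢
  rintro ⟨f, hf⟩
  exact he ⟨f ∘ collapse A a, (coboundary_collapseEnds f).symm.trans hf⟩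

theorem edgeClass_collapseEnds_add_add_eq_zero (hx : IsClaw G x b c d) (hxA : x ∉ A)
    (hxa : x ≠ a) :
    edgeClass (collapseEnds G A a) ⟨s(x, b), hx.adj₁⟩ +
      edgeClass (collapseEnds G A a) ⟨s(x, c), hx.adj₂⟩ +
      edgeClass (collapseEnds G A a) ⟨s(x, d), hx.adj₃⟩ = 0 := by
  refine edgeClass_add_add_eq_zero (f := Pi.single x 1) ?_
  rw [coboundary_collapseEnds_of_forall_eq, cut_single_of_isClaw hx]
  intro y hy
  rw [Pi.single_eq_of_ne hxa.symm, Pi.single_eq_of_ne fun hyx : y = x => hxA (hyx ▸ hy)]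

theorem edgeClass_collapseEnds_add_eq (hx : IsClaw G x b c d) (hxA : x ∉ A) (hxa : x ≠ a) :
    edgeClass (collapseEnds G A a) ⟨s(x, c), hx.adj₂⟩ +
      edgeClass (collapseEnds G A a) ⟨s(x, d), hx.adj₃⟩ =
      edgeClass (collapseEnds G A a) ⟨s(x, b), hx.adj₁⟩ := by
  have hsum := edgeClass_collapseEnds_add_add_eq_zero hx hxA hxa
  rwa [add_assoc, add_eq_zero_iff_eq_neg, ZModModule.neg_eq_self, eq_comm] at hsum

theorem edgeClass_collapseEnds_ne_zero_of_mem_of_mem (hx : x ∈ A) (hy : y ∈ A)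
    (hxy : G.Adj x y) : edgeClass (collapseEnds G A a) ⟨s(x, y), hxy⟩ ≠ 0 := by
  rw [Ne, edgeClass_eq_zero_iff]
  rintro ⟨f, hf⟩
  have hcut : cut G (f ∘ collapse A a) ⟨s(x, y), hxy⟩ = 0 :=
    (cut_eq_zero_iff hxy).2 (by simp [collapse, hx, hy])
  rw [coboundary_collapseEnds] at hf
  simp [hf] at hcut

end Collapse

section SideFlows

open scoped Classical

variable {V M : Type*} [AddCommGroup M] [Module (ZMod 2) M] {G : SimpleGraph V}

/-- Kirchhoff's law at `x` for edge values in a group of exponent two. -/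
def IsFlowAt (G : SimpleGraph V) (φ : Sym2 V → M) (x : V) : Prop :=
  ∀ a b c, IsClaw G x a b c → φ s(x, a) + φ s(x, b) + φ s(x, c) = 0

/-- The edge values read off from a linear map on edge classes, extended by `0` to non-edges. -/
noncomputable def flowOf {ends : G.edgeSet → Sym2 V} (θ : EdgeClass ends →ₗ[ZMod 2] M)
    (e : Sym2 V) : M :=
  if h : e ∈ G.edgeSet then θ (edgeClass ends ⟨e, h⟩) else 0

theorem flowOf_mk {ends : G.edgeSet → Sym2 V} (θ : EdgeClass ends →ₗ[ZMod 2] M) {x y : V}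
    (h : G.Adj x y) : flowOf θ s(x, y) = θ (edgeClass ends ⟨s(x, y), h⟩) :=
  dif_pos h

theorem flowOf_coe {ends : G.edgeSet → Sym2 V} (θ : EdgeClass ends →ₗ[ZMod 2] M)
    (e : G.edgeSet) : flowOf θ e = θ (edgeClass ends e) :=
  dif_pos e.2

theorem isFlowAt_flowOf_collapseEnds {A : Set V} {a x : V}
    (θ : EdgeClass (collapseEnds G A a) →ₗ[ZMod 2] M) (hxA : x ∉ A) (hxa : x ≠ a) :
    IsFlowAt G (flowOf θ) x := fun b c d hx => by
  rw [flowOf_mk θ hx.adj₁, flowOf_mk θ hx.adj₂, flowOf_mk θ hx.adj₃, ← map_add, ← map_add,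
    edgeClass_collapseEnds_add_add_eq_zero hx hxA hxa, map_zero]

variable {s t p y u u' z₁ z₂ z₁' z₂' : V} {f : V → ZMod 2} {e e' : G.edgeSet}

theorem IsTwoCut.edgeClass_inside_eq (hf : IsTwoCut G s t f e e') :
    edgeClass (collapseEnds G {x | f x = 0} s) e = edgeClass (collapseEnds G {x | f x = 0} s) e' :=
  edgeClass_eq_edgeClass_iff.2 ⟨f, (coboundary_collapseEnds_of_forall_eq fun x hx => by
    rw [hf.apply_s]; exact hx).trans hf.cut_eq⟩

theorem IsMinTwoCut.edgeClass_inside_ne (hf : IsMinTwoCut G s t f e e') {g : G.edgeSet}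
    (hge : g ≠ e) (hge' : g ≠ e') :
    edgeClass (collapseEnds G {x | f x = 0} s) g ≠
      edgeClass (collapseEnds G {x | f x = 0} s) e := by
  rw [ne_comm, Ne, edgeClass_eq_edgeClass_iff]
  rintro ⟨k, hk⟩
  let k' : V → ZMod 2 := k ∘ collapse {x | f x = 0} s + k s • 1
  have hk' : ∀ x, f x = 0 → k' x = 0 := fun x hx => by
    simp [k', collapse, hx, ZModModule.add_self]
  have hcut : cut G k' = Pi.single e 1 + Pi.single g 1 := by
    rw [map_add, map_smul, coboundary_one, smul_zero, add_zero, ← coboundary_collapseEnds, hk]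
  have htwo : IsTwoCut G s t k' e g :=
    ⟨hk' s hf.apply_s, hk' t hf.apply_t, fun x hx => hf.reachable x (mt (hk' x) hx), hge.symm, hcut⟩
  rw [hf.eq_of_le k' _ _ htwo hk', hf.cut_eq] at hcut
  have := congrFun hcut g
  simp [hge, hge'] at this

theorem IsMinTwoCut.edgeClass_inside_ne_of_isClaw (h : IsPendantCubic G s t)
    (hp : IsClaw G p y u u') (hu : IsClaw G u p z₁ z₂)
    (hf : IsMinTwoCut G s t f ⟨s(p, y), hp.adj₁⟩ e') (hfp : f p = 1) :
    edgeClass (collapseEnds G {x | f x = 0} s) ⟨s(u, z₁), hu.adj₂⟩ ≠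
      edgeClass (collapseEnds G {x | f x = 0} s) ⟨s(p, y), hp.adj₁⟩ := by
  have hfu := hf.apply_eq_one_of_isClaw h hp hfp
  refine hf.edgeClass_inside_ne ?_ (hf.ne_of_isClaw hp hu hfp hfu).symm
  simp [Subtype.ext_iff, hp.adj₂.ne.symm, hu.ne₁₂.symm]

theorem IsClaw.edgeClass_inside_add_eq (hp : IsClaw G p y u u') (hfs : f s = 0) (hfp : f p = 1) :
    edgeClass (collapseEnds G {x | f x = 0} s) ⟨s(p, u), hp.adj₂⟩ +
      edgeClass (collapseEnds G {x | f x = 0} s) ⟨s(p, u'), hp.adj₃⟩ =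
      edgeClass (collapseEnds G {x | f x = 0} s) ⟨s(p, y), hp.adj₁⟩ :=
  edgeClass_collapseEnds_add_eq hp (by simp [hfp]) (by rintro rfl; simp [hfs] at hfp)

theorem IsMinTwoCut.isBranching [Fintype V] (h : IsPendantCubic G s t) (hp : IsClaw G p y u u')
    (hu : IsClaw G u p z₁ z₂) (hu' : IsClaw G u' p z₁' z₂')
    (hf : IsMinTwoCut G s t f ⟨s(p, y), hp.adj₁⟩ e') (hfp : f p = 1) :
    let κ := edgeClass (collapseEnds G {x | f x = 0} s)
    IsBranching (Finset.univ.image κ) (κ ⟨s(p, y), hp.adj₁⟩) (κ ⟨s(p, u), hp.adj₂⟩)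
      (κ ⟨s(p, u'), hp.adj₃⟩) (κ ⟨s(u, z₁), hu.adj₂⟩) (κ ⟨s(u, z₂), hu.adj₃⟩)
      (κ ⟨s(u', z₁'), hu'.adj₂⟩) (κ ⟨s(u', z₂'), hu'.adj₃⟩) where
  mem_e₀ := Finset.mem_image_of_mem _ (Finset.mem_univ _)
  mem_e₁ := Finset.mem_image_of_mem _ (Finset.mem_univ _)
  mem_e₂ := Finset.mem_image_of_mem _ (Finset.mem_univ _)
  mem_f₁ := Finset.mem_image_of_mem _ (Finset.mem_univ _)
  mem_f₂ := Finset.mem_image_of_mem _ (Finset.mem_univ _)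
  mem_g₁ := Finset.mem_image_of_mem _ (Finset.mem_univ _)
  mem_g₂ := Finset.mem_image_of_mem _ (Finset.mem_univ _)
  add_e := hp.edgeClass_inside_add_eq hf.apply_s hfp
  add_f := by
    have hfu := hf.apply_eq_one_of_isClaw h hp hfp
    simpa only [Sym2.eq_swap (a := u) (b := p)] using hu.edgeClass_inside_add_eq hf.apply_s hfu
  add_g := by
    have hfu' := hf.apply_eq_one_of_isClaw h hp.swap₂₃ hfp
    simpa only [Sym2.eq_swap (a := u') (b := p)] using hu'.edgeClass_inside_add_eq hf.apply_s hfu'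
  f₁_ne := hf.edgeClass_inside_ne_of_isClaw h hp hu hfp
  f₂_ne := hf.edgeClass_inside_ne_of_isClaw h hp hu.swap₂₃ hfp
  g₁_ne := hf.edgeClass_inside_ne_of_isClaw h hp.swap₂₃ hu' hfp
  g₂_ne := hf.edgeClass_inside_ne_of_isClaw h hp.swap₂₃ hu'.swap₂₃ hfp

theorem IsPendantCubic.edgeClass_inside_ne_zero (h : IsPendantCubic G s t)
    (hfs : f s = 0) (hft : f t = 0) (g : G.edgeSet) :
    edgeClass (collapseEnds G {x | f x = 0} s) g ≠ 0 := by
  obtain hg | hg := eq_or_ne g.1 s(s, t)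
  · obtain rfl : g = ⟨s(s, t), h.adj⟩ := Subtype.ext hg
    exact edgeClass_collapseEnds_ne_zero_of_mem_of_mem (A := {x | f x = 0}) (x := s) (y := t)
      hfs hft h.adj
  · exact edgeClass_collapseEnds_ne_zero (h.edgeClass_ne_zero g hg)

theorem IsMinTwoCut.exists_flow_inside [Finite V] (h : IsPendantCubic G s t)
    (hp : IsClaw G p y u u') (hf : IsMinTwoCut G s t f ⟨s(p, y), hp.adj₁⟩ e') (hfp : f p = 1) :
    ∃ φ : Sym2 V → Fin 3 → ZMod 2, (∀ g ∈ G.edgeSet, φ g ≠ 0) ∧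
      (∀ x, f x = 1 → IsFlowAt G φ x) ∧ φ e' = φ s(p, y) ∧ ∃ v, v ≠ φ s(p, y) ∧
        (∃ z, z ≠ p ∧ G.Adj u z ∧ φ s(u, z) = v) ∧ ∃ z, z ≠ p ∧ G.Adj u' z ∧ φ s(u', z) = v := by
  cases nonempty_fintype V
  have hne := h.edgeClass_inside_ne_zero hf.apply_s hf.apply_t
  have hfu := hf.apply_eq_one_of_isClaw h hp hfp
  have hfu' := hf.apply_eq_one_of_isClaw h hp.swap₂₃ hfp
  obtain ⟨z₁, z₂, hu⟩ := h.exists_isClaw (hf.ne_t hfu) hp.adj₂.symm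
  obtain ⟨z₁', z₂', hu'⟩ := h.exists_isClaw (hf.ne_t hfu') hp.adj₃.symm
  obtain ⟨θ, hθ, v, hv, hvu, hvu'⟩ := (isSparse_image_edgeClass hne
    ).exists_linearMap_apply_eq_of_isBranching (hf.isBranching h hp hu hu' hfp)
  refine ⟨flowOf θ, fun g hg => ?_, fun x hx => ?_, ?_, v, ?_, ?_, ?_⟩
  · rw [flowOf_coe θ ⟨g, hg⟩]
    exact hθ _ (Finset.mem_image_of_mem _ (Finset.mem_univ _))
  · exact isFlowAt_flowOf_collapseEnds θ (by simp [hx]) (hf.ne_s hx)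
  · rw [flowOf_coe, flowOf_mk θ hp.adj₁, hf.edgeClass_inside_eq]
  · rwa [flowOf_mk θ hp.adj₁]
  · rcases hvu with rfl | rfl
    exacts [⟨z₁, hu.ne₁₂.symm, hu.adj₂, flowOf_mk θ _⟩, ⟨z₂, hu.ne₁₃.symm, hu.adj₃, flowOf_mk θ _⟩]
  · rcases hvu' with rfl | rfl
    exacts [⟨z₁', hu'.ne₁₂.symm, hu'.adj₂, flowOf_mk θ _⟩,
      ⟨z₂', hu'.ne₁₃.symm, hu'.adj₃, flowOf_mk θ _⟩]

theorem IsTwoCut.edgeClass_outside_add_add_eq_zero (h : IsPendantCubic G s t)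
    (hf : IsTwoCut G s t f e e') (hfp : f p = 1) :
    edgeClass (collapseEnds G {x | f x = 1 ∨ x = t} p) e +
      edgeClass (collapseEnds G {x | f x = 1 ∨ x = t} p) e' +
      edgeClass (collapseEnds G {x | f x = 1 ∨ x = t} p) ⟨s(s, t), h.adj⟩ = 0 := by
  refine edgeClass_add_add_eq_zero (f := f + Pi.single t 1) ?_
  rw [coboundary_collapseEnds_of_forall_eq, map_add, hf.cut_eq, h.cut_single_leaf]
  rintro x (hx | rfl)
  · simp [hx, hfp, hf.ne_t hx, hf.ne_t hfp]
  · simp [hf.apply_t, hfp, hf.ne_t hfp]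

theorem IsTwoCut.edgeClass_outside_ne_zero (h : IsPendantCubic G s t)
    (hf : IsTwoCut G s t f e e') (hfp : f p = 1) (g : G.edgeSet) :
    edgeClass (collapseEnds G {x | f x = 1 ∨ x = t} p) g ≠ 0 := by
  obtain hg | hg := eq_or_ne g.1 s(s, t)
  · obtain rfl : g = ⟨s(s, t), h.adj⟩ := Subtype.ext hg
    rw [Ne, edgeClass_eq_zero_iff]
    rintro ⟨k, hk⟩
    rw [coboundary_collapseEnds] at hk
    set k' := k ∘ collapse {x | f x = 1 ∨ x = t} p
    have hsp : k' s = k' p :=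
      apply_eq_of_reachable_deleteEdges (e := ⟨s(s, t), h.adj⟩)
        (fun g hg => by rw [hk, Pi.single_eq_of_ne hg]) (hf.reachable p (by simp [hfp]))
    have htp : k' t = k' p := by simp [k', collapse, hfp]
    have hcut : cut G k' ⟨s(s, t), h.adj⟩ = 0 := (cut_eq_zero_iff h.adj).2 (hsp.trans htp.symm)
    simp [hk] at hcut
  · exact edgeClass_collapseEnds_ne_zero (h.edgeClass_ne_zero g hg)

theorem IsTwoCut.exists_flow_outside [Finite V] (h : IsPendantCubic G s t) {hpy : G.Adj p y}
    (hf : IsTwoCut G s t f ⟨s(p, y), hpy⟩ e') (hfp : f p = 1) (hfy : f y = 0) :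
    ∃ φ : Sym2 V → Fin 3 → ZMod 2, (∀ g ∈ G.edgeSet, φ g ≠ 0) ∧
      (∀ x, f x = 0 → x ≠ t → IsFlowAt G φ x) ∧ φ s(p, y) + φ e' + φ s(s, t) = 0 ∧
      ∃ z, z ≠ p ∧ G.Adj y z ∧ φ s(y, z) = φ s(s, t) := by
  cases nonempty_fintype V
  let κ := edgeClass (collapseEnds G {x | f x = 1 ∨ x = t} p)
  have hyt : y ≠ t := by
    rintro rfl
    exact hf.ne_s hfp ((h.adj_iff p).1 hpy.symm)
  obtain ⟨z₁, z₂, hy⟩ := h.exists_isClaw hyt hpy.symm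
  have hmem (g : G.edgeSet) : κ g ∈ Finset.univ.image κ :=
    Finset.mem_image_of_mem _ (Finset.mem_univ g)
  have hyz : κ ⟨s(y, z₁), hy.adj₂⟩ + κ ⟨s(y, z₂), hy.adj₃⟩ = κ ⟨s(p, y), hpy⟩ := by
    simpa only [κ, Sym2.eq_swap (a := y) (b := p)] using
      edgeClass_collapseEnds_add_eq hy (by simp [hfy, hyt]) hpy.ne'
  have hsum := hf.edgeClass_outside_add_add_eq_zero h hfp
  have hst : κ ⟨s(s, t), h.adj⟩ + κ ⟨s(p, y), hpy⟩ = κ e' := by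
    rwa [add_right_comm, add_eq_zero_iff_eq_neg, ZModModule.neg_eq_self, add_comm] at hsum
  obtain ⟨θ, hθ, hpath⟩ := (isSparse_image_edgeClass (hf.edgeClass_outside_ne_zero h hfp)
    ).exists_linearMap_apply_eq_of_path (hmem ⟨s(s, t), h.adj⟩) (hmem ⟨s(y, z₁), hy.adj₂⟩)
    (hmem ⟨s(y, z₂), hy.adj₃⟩) (hyz ▸ hmem _) (hyz ▸ hst ▸ hmem e')
  refine ⟨flowOf θ, fun g hg => ?_, fun x hx hxt => ?_, ?_, ?_⟩
  · rw [flowOf_coe θ ⟨g, hg⟩]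
    exact hθ _ (hmem _)
  · refine isFlowAt_flowOf_collapseEnds θ (by simp [hx, hxt]) ?_
    rintro rfl
    simp [hx] at hfp
  · rw [flowOf_mk θ hpy, flowOf_coe, flowOf_mk θ h.adj, ← map_add, ← map_add, hsum, map_zero]
  · rw [flowOf_mk θ h.adj]
    rcases hpath with heq | heq
    exacts [⟨z₁, hy.ne₁₂.symm, hy.adj₂, (flowOf_mk θ _).trans heq⟩,
      ⟨z₂, hy.ne₁₃.symm, hy.adj₃, (flowOf_mk θ _).trans heq⟩]

end SideFlows

section Gluing

open scoped Classical

theorem exists_linearEquiv_apply_eq_of_pair {K M : Type*} [DivisionRing K] [AddCommGroup M]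
    [Module K M] {a b a' b' : M} (h : LinearIndependent K ![a, b])
    (h' : LinearIndependent K ![a', b']) : ∃ σ : M ≃ₗ[K] M, σ a = a' ∧ σ b = b' := by
  have : FiniteDimensional K (Submodule.span K (Set.range ![a, b])) :=
    FiniteDimensional.span_of_finite K (Set.finite_range _)
  obtain ⟨σ, hσ⟩ := Submodule.exists_linearEquiv_restrict_eq
    (h.linearCombinationEquiv.symm ≪≫ₗ h'.linearCombinationEquiv)
  have happly (i : Fin 2) : σ (![a, b] i) = ![a', b'] i := by
    have := hσ (h.linearCombinationEquiv (Finsupp.single i 1))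
    simpa using this.symm
  exact ⟨σ, happly 0, happly 1⟩

theorem linearIndependent_pair_zmod_two {M : Type*} [AddCommGroup M] [Module (ZMod 2) M] {a b : M}
    (ha : a ≠ 0) (hb : b ≠ 0) (hab : a ≠ b) : LinearIndependent (ZMod 2) ![a, b] := by
  refine LinearIndependent.pair_iff.2 fun i j hij => ?_
  have hcases : ∀ i : ZMod 2, i = 0 ∨ i = 1 := by decide
  have : a + b ≠ 0 := by rwa [Ne, add_eq_zero_iff_eq_neg, ZModModule.neg_eq_self]
  rcases hcases i with rfl | rfl <;> rcases hcases j with rfl | rfl <;> simp_all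

variable {V M : Type*} [AddCommGroup M] {G : SimpleGraph V} {s t p x y z : V}
  {f : V → ZMod 2} {e e' : G.edgeSet} {v : M} {φ ψ : Sym2 V → M}

/-- A nowhere-zero assignment of vectors to the edges of `G` whose sum is `0` at every vertex
except `t` and the defect `p`; at `p` the sum is `v`, and `v` occurs on an edge at each neighbour of
`p` other than the edge to `p`. -/
structure IsDefectFlow (G : SimpleGraph V) (φ : Sym2 V → M) (t p : V) (v : M) : Prop where
  ne_zero : ∀ x y, G.Adj x y → φ s(x, y) ≠ 0
  isFlowAt : ∀ x, x ≠ p → x ≠ t → IsFlowAt G φ x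
  sum_eq : ∀ a b c, IsClaw G p a b c → φ s(p, a) + φ s(p, b) + φ s(p, c) = v
  exists_adj : ∀ y, G.Adj p y → ∃ z, z ≠ p ∧ G.Adj y z ∧ φ s(y, z) = v

/-- The edge values that agree with `φ` on the edges meeting the support of `f`, except that `v` is
added on `e`, and with `ψ` on the other edges. -/
noncomputable def glue (f : V → ZMod 2) (e : Sym2 V) (v : M) (φ ψ : Sym2 V → M) (g : Sym2 V) :
    M :=
  if ∃ x ∈ g, f x = 1 then φ g + (if g = e then v else 0) else ψ g

theorem glue_of_apply_eq_one (hx : f x = 1) (e : Sym2 V) (v : M) :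
    glue f e v φ ψ s(x, z) = φ s(x, z) + if s(x, z) = e then v else 0 :=
  if_pos ⟨x, Sym2.mem_mk_left x z, hx⟩

theorem glue_of_apply_eq_one_of_ne (hx : f x = 1) (hy : f y = 0) (hxp : x ≠ p) :
    glue f s(p, y) v φ ψ s(x, z) = φ s(x, z) := by
  have hxy : x ≠ y := by rintro rfl; simp [hy] at hx
  rw [glue_of_apply_eq_one hx, if_neg (by simp [hxp, hxy]), add_zero]

theorem IsTwoCut.glue_of_apply_eq_zero (hf : IsTwoCut G s t f e e') (he : ψ e = φ e + v)
    (he' : ψ e' = φ e') (hx : f x = 0) (hxz : G.Adj x z) :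
    glue f e v φ ψ s(x, z) = ψ s(x, z) := by
  rw [glue]
  split_ifs with hex hxe
  · rw [hxe, he]
  · have hxe' : (⟨s(x, z), hxz⟩ : G.edgeSet) = e' := by
      by_contra hxe'
      have hcut := hf.cut_of_ne (g := ⟨s(x, z), hxz⟩) (fun h => hxe (congrArg Subtype.val h)) hxe'
      rw [cut_eq_zero_iff, hx] at hcut
      simp [hx, ← hcut] at hex
    rw [show s(x, z) = e'.1 from congrArg Subtype.val hxe', he', add_zero]
  · rfl

theorem sum_glue_of_isClaw {a b c : V} (hf : f p = 1) (hpy : G.Adj p y) (hφ : IsFlowAt G φ p)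
    (hp : IsClaw G p a b c) : glue f s(p, y) v φ ψ s(p, a) + glue f s(p, y) v φ ψ s(p, b) +
      glue f s(p, y) v φ ψ s(p, c) = v := by
  have hsum := hφ a b c hp
  have := hp.ne₁₂
  have := hp.ne₁₃
  have := hp.ne₂₃
  have := (hp.adj_iff y).1 hpy
  simp only [glue_of_apply_eq_one hf, Sym2.congr_right]
  grind

theorem IsTwoCut.isDefectFlow_glue {u u' : V} (hp : IsClaw G p y u u')
    (hf : IsTwoCut G s t f ⟨s(p, y), hp.adj₁⟩ e') (hfp : f p = 1) (hfy : f y = 0)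
    (hfu : f u = 1) (hfu' : f u' = 1)
    (he : ψ s(p, y) = φ s(p, y) + v) (he' : ψ e' = φ e')
    (hφ : ∀ g ∈ G.edgeSet, φ g ≠ 0) (hψ : ∀ g ∈ G.edgeSet, ψ g ≠ 0)
    (hφf : ∀ x, f x = 1 → IsFlowAt G φ x) (hψf : ∀ x, f x = 0 → x ≠ t → IsFlowAt G ψ x)
    (hu : ∃ z, z ≠ p ∧ G.Adj u z ∧ φ s(u, z) = v)
    (hu' : ∃ z, z ≠ p ∧ G.Adj u' z ∧ φ s(u', z) = v)
    (hy : ∃ z, z ≠ p ∧ G.Adj y z ∧ ψ s(y, z) = v) :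
    IsDefectFlow G (glue f s(p, y) v φ ψ) t p v := by
  have hzero {x z : V} (hx : f x = 0) (hxz : G.Adj x z) :
      glue f s(p, y) v φ ψ s(x, z) = ψ s(x, z) :=
    hf.glue_of_apply_eq_zero (e := ⟨s(p, y), hp.adj₁⟩) he he' hx hxz
  have hcases (x : V) : f x = 0 ∨ f x = 1 := (by decide : ∀ a : ZMod 2, a = 0 ∨ a = 1) (f x)
  refine ⟨fun x z hxz => ?_, fun x hxp hxt a b c hx => ?_, fun a b c => ?_, fun z hpz => ?_⟩
  · rcases hcases x with hx | hx
    · exact hzero hx hxz ▸ hψ _ hxz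
    rcases hcases z with hz | hz
    · rw [Sym2.eq_swap (a := x)]
      exact hzero hz hxz.symm ▸ hψ _ hxz.symm
    by_cases hxp : x = p
    · have hzp : z ≠ p := hxp ▸ hxz.ne'
      rw [Sym2.eq_swap (a := x), glue_of_apply_eq_one_of_ne hz hfy hzp]
      exact hφ _ hxz.symm
    · rw [glue_of_apply_eq_one_of_ne hx hfy hxp]
      exact hφ _ hxz
  · rcases hcases x with hx0 | hx1
    · rw [hzero hx0 hx.adj₁, hzero hx0 hx.adj₂, hzero hx0 hx.adj₃]
      exact hψf x hx0 hxt a b c hx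
    · simp only [glue_of_apply_eq_one_of_ne hx1 hfy hxp]
      exact hφf x hx1 a b c hx
  · exact sum_glue_of_isClaw hfp hp.adj₁ (hφf p hfp)
  · rcases (hp.adj_iff z).1 hpz with rfl | rfl | rfl
    · obtain ⟨z', hz', hadj, hv⟩ := hy
      exact ⟨z', hz', hadj, (hzero hfy hadj).trans hv⟩
    · obtain ⟨z', hz', hadj, hv⟩ := hu
      exact ⟨z', hz', hadj, (glue_of_apply_eq_one_of_ne hfu hfy hpz.ne').trans hv⟩
    · obtain ⟨z', hz', hadj, hv⟩ := hu'
      exact ⟨z', hz', hadj, (glue_of_apply_eq_one_of_ne hfu' hfy hpz.ne').trans hv⟩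

theorem IsPendantCubic.exists_isDefectFlow [Finite V] (h : IsPendantCubic G s t) :
    ∃ φ : Sym2 V → Fin 3 → ZMod 2, ∃ p v, p ≠ s ∧ p ≠ t ∧ IsDefectFlow G φ t p v := by
  obtain ⟨f, e, e', hf⟩ := h.exists_isMinTwoCut
  obtain ⟨p, y, hpy, rfl, hfp, hfy⟩ := hf.exists_apply_eq
  obtain ⟨u, u', hp⟩ := h.exists_isClaw (hf.ne_t hfp) hpy
  have hfu := hf.apply_eq_one_of_isClaw h hp hfp
  have hfu' := hf.apply_eq_one_of_isClaw h hp.swap₂₃ hfp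
  obtain ⟨φ, hφ, hφf, hφe, v, hvne, hu, hu'⟩ := hf.exists_flow_inside h hp hfp
  obtain ⟨ψ, hψ, hψf, hψe, hy⟩ := hf.exists_flow_outside h hfp hfy
  have hv : v ≠ 0 := by
    obtain ⟨z, -, hz, rfl⟩ := hu
    exact hφ _ hz
  have hne : φ s(p, y) + v ≠ 0 := by
    rw [Ne, add_eq_zero_iff_eq_neg, ZModModule.neg_eq_self]
    exact hvne.symm
  have hne' : v ≠ φ s(p, y) + v := fun h => hφ _ hpy (right_eq_add.1 h)
  have hψe' : ψ e' = ψ s(s, t) + ψ s(p, y) := by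
    rwa [add_right_comm, add_eq_zero_iff_eq_neg, ZModModule.neg_eq_self, eq_comm, add_comm] at hψe
  have hψne : ψ s(s, t) ≠ ψ s(p, y) := fun h => hψ e' e'.2 (by
    rw [hψe', h, ZModModule.add_self])
  obtain ⟨σ, hσv, hσe⟩ := exists_linearEquiv_apply_eq_of_pair
    (linearIndependent_pair_zmod_two (hψ _ h.adj) (hψ _ hpy) hψne)
    (linearIndependent_pair_zmod_two hv hne hne')
  refine ⟨glue f s(p, y) v φ (σ ∘ ψ), p, v, hf.ne_s hfp, hf.ne_t hfp,
    hf.isDefectFlow_glue hp hfp hfy hfu hfu' hσe ?_ hφ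
      (fun g hg => by simpa using hψ g hg) hφf (fun x hx hxt a b c hclaw => ?_) hu hu' ?_⟩
  · rw [Function.comp_apply, hψe', map_add, hσv, hσe, hφe, add_left_comm, ZModModule.add_self,
      add_zero]
  · simp only [Function.comp_apply, ← map_add, hψf x hx hxt a b c hclaw, map_zero]
  · obtain ⟨z, hz, hadj, hyz⟩ := hy
    exact ⟨z, hz, hadj, by rw [Function.comp_apply, hyz, hσv]⟩

end Gluing

section Colorings

variable {V C C' : Type*} {G : SimpleGraph V} {x y a b c : V} {φ : Sym2 V → C} {ι : C → C'}

theorem colorSet_of_isClaw (h : IsClaw G x a b c) (φ : Sym2 V → C) :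
    colorSet G φ x = {φ s(x, a), φ s(x, b), φ s(x, c)} := by
  have hinc : G.incidenceSet x = {s(x, a), s(x, b), s(x, c)} := by
    ext e
    simp only [Set.mem_insert_iff, Set.mem_singleton_iff]
    constructor
    · rintro ⟨he, z, rfl⟩
      rcases (h.adj_iff z).1 he with rfl | rfl | rfl <;> simp
    · rintro (rfl | rfl | rfl)
      exacts [⟨h.adj₁, Sym2.mem_mk_left _ _⟩, ⟨h.adj₂, Sym2.mem_mk_left _ _⟩,
        ⟨h.adj₃, Sym2.mem_mk_left _ _⟩]
  rw [colorSet, hinc, Set.image_insert_eq, Set.image_pair]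

theorem IsProperEdgeColoring.comp (h : IsProperEdgeColoring G φ)
    (hι : Set.InjOn ι (φ '' G.edgeSet)) : IsProperEdgeColoring G (ι ∘ φ) :=
  fun e he e' he' hne hinc heq => h e he e' he' hne hinc
    (hι (Set.mem_image_of_mem φ he) (Set.mem_image_of_mem φ he') heq)

theorem ncard_colorSet_comp_union (hι : Set.InjOn ι (φ '' G.edgeSet)) (x y : V) :
    (colorSet G (ι ∘ φ) x ∪ colorSet G (ι ∘ φ) y).ncard =
      (colorSet G φ x ∪ colorSet G φ y).ncard := by
  have hsub (z : V) : colorSet G φ z ⊆ φ '' G.edgeSet :=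
    Set.image_mono (G.incidenceSet_subset z)
  simp only [colorSet, Set.image_comp, ← Set.image_union]
  rw [Set.image_union]
  exact (hι.mono (Set.union_subset (hsub x) (hsub y))).ncard_image

theorem isProperEdgeColoring_of_forall_adj
    (h : ∀ x a b, G.Adj x a → G.Adj x b → a ≠ b → φ s(x, a) ≠ φ s(x, b)) :
    IsProperEdgeColoring G φ := by
  rintro _ he _ he' hne ⟨x, ⟨a, rfl⟩, b, rfl⟩
  exact h x a b he he' fun hab => hne (hab ▸ rfl)

end Colorings

section FanoPlane

variable {M : Type*} {r a b c d : M}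

theorem ncard_union_eq_five (hra : r ≠ a) (hrb : r ≠ b) (hrc : r ≠ c) (hrd : r ≠ d) (hab : a ≠ b)
    (hac : a ≠ c) (had : a ≠ d) (hbc : b ≠ c) (hbd : b ≠ d) (hcd : c ≠ d) :
    ({r, a, b} ∪ {r, c, d} : Set M).ncard = 5 := by
  classical
  have hcoe : ({r, a, b} ∪ {r, c, d} : Set M) = ({r, a, b, c, d} : Finset M) := by
    push_cast
    grind
  rw [hcoe, Set.ncard_coe_finset]
  simp [hra, hrb, hrc, hrd, hab, hac, had, hbc, hbd, hcd]

variable [AddCommGroup M] [Module (ZMod 2) M]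

theorem ne_of_add_add_eq_zero (hc : c ≠ 0) (h : a + b + c = 0) : a ≠ b := by
  rintro rfl
  exact hc (by rwa [ZModModule.add_self, zero_add] at h)

theorem ncard_line_union_line (hr : r ≠ 0) (ha : a ≠ 0) (hb : b ≠ 0) (hc : c ≠ 0) (hd : d ≠ 0)
    (hab : r + a + b = 0) (hcd : r + c + d = 0) :
    ({r, a, b} ∪ {r, c, d} : Set M).ncard = 3 ∨ ({r, a, b} ∪ {r, c, d} : Set M).ncard = 5 := by
  have := ZModModule.add_self r
  have := ZModModule.add_self a
  have := ZModModule.add_self b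
  have := ZModModule.add_self c
  have hra : r ≠ a := ne_of_add_add_eq_zero hb hab
  have hrb : r ≠ b := by grind
  have hne : a ≠ b := by grind
  have hthree : ({r, a, b} : Set M).ncard = 3 := Set.ncard_eq_three.2 ⟨r, a, b, hra, hrb, hne, rfl⟩
  obtain rfl | hac := eq_or_ne a c
  · obtain rfl : b = d := by grind
    exact .inl (by rwa [Set.union_self])
  obtain rfl | hbc := eq_or_ne b c
  · obtain rfl : a = d := by grind
    exact .inl (by rwa [Set.pair_comm b a, Set.union_self])
  · refine .inr (ncard_union_eq_five hra hrb ?_ ?_ hne hac ?_ hbc ?_ ?_) <;> grind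

theorem ncard_triple_union_line (hr : r ≠ 0) (ha : a ≠ 0) (hb : b ≠ 0) (hc : c ≠ 0)
    (hra : r ≠ a) (hrb : r ≠ b) (hab : a ≠ b) (habc : r + a + b = c) (hcd : r + c + d = 0) :
    ({r, a, b} ∪ {r, c, d} : Set M).ncard = 5 := by
  have := ZModModule.add_self r
  have := ZModModule.add_self a
  have := ZModModule.add_self b
  have := ZModModule.add_self c
  have hd : d = a + b := by grind
  refine ncard_union_eq_five hra hrb ?_ ?_ hab ?_ ?_ ?_ ?_ ?_ <;> grind

end FanoPlane

section DefectFlow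

variable {V M : Type*} [AddCommGroup M] {G : SimpleGraph V} {s t p x y a b c : V}
  {φ : Sym2 V → M} {v : M}

namespace IsDefectFlow

theorem exists_isClaw (hφ : IsDefectFlow G φ t p v) (h : IsPendantCubic G s t) (hps : p ≠ s)
    (hpy : G.Adj p y) : y ≠ t ∧ ∃ z z', IsClaw G y p z z' ∧ φ s(y, z) = v := by
  have hyt : y ≠ t := by
    rintro rfl
    exact hps ((h.adj_iff p).1 hpy.symm)
  obtain ⟨z, hzp, hyz, hv⟩ := hφ.exists_adj y hpy
  obtain ⟨z₁, z₂, hy⟩ := h.exists_isClaw hyt hpy.symm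
  obtain ⟨z', hy⟩ := hy.exists_of_adj_of_ne hyz hzp
  exact ⟨hyt, z, z', hy, hv⟩

variable [Module (ZMod 2) M]

theorem apply_ne (hφ : IsDefectFlow G φ t p v) (h : IsPendantCubic G s t) (hps : p ≠ s)
    (hpy : G.Adj p y) : φ s(p, y) ≠ v := by
  obtain ⟨hyt, z, z', hy, rfl⟩ := hφ.exists_isClaw h hps hpy
  rw [Sym2.eq_swap]
  exact ne_of_add_add_eq_zero (hφ.ne_zero y z' hy.adj₃) (hφ.isFlowAt y hpy.ne' hyt p z z' hy)

theorem apply_ne_apply (hφ : IsDefectFlow G φ t p v) (h : IsPendantCubic G s t) (hps : p ≠ s)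
    (hxt : x ≠ t) (hx : IsClaw G x a b c) : φ s(x, a) ≠ φ s(x, b) := by
  obtain rfl | hxp := eq_or_ne x p
  · intro hab
    refine hφ.apply_ne h hps hx.adj₃ ?_
    rw [← hφ.sum_eq a b c hx, hab, ZModModule.add_self, zero_add]
  · exact ne_of_add_add_eq_zero (hφ.ne_zero x c hx.adj₃) (hφ.isFlowAt x hxp hxt a b c hx)

theorem isProperEdgeColoring (hφ : IsDefectFlow G φ t p v) (h : IsPendantCubic G s t)
    (hps : p ≠ s) : IsProperEdgeColoring G φ := by
  refine isProperEdgeColoring_of_forall_adj fun x a b ha hb hab => ?_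
  obtain rfl | hxt := eq_or_ne x t
  · exact absurd (((h.adj_iff a).1 ha).trans ((h.adj_iff b).1 hb).symm) hab
  · obtain ⟨_, _, hx⟩ := h.exists_isClaw hxt ha
    obtain ⟨_, hx⟩ := hx.exists_of_adj_of_ne hb hab.symm
    exact hφ.apply_ne_apply h hps hxt hx

theorem isRichAt (hφ : IsDefectFlow G φ t p v) (h : IsPendantCubic G s t) (hps : p ≠ s)
    (hpt : p ≠ t) (hpy : G.Adj p y) : IsRichAt G φ p y := by
  obtain ⟨hyt, z, z', hy, rfl⟩ := hφ.exists_isClaw h hps hpy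
  obtain ⟨a, b, hp⟩ := h.exists_isClaw hpt hpy
  have hsum := hφ.isFlowAt y hpy.ne' hyt p z z' hy
  rw [IsRichAt, colorSet_of_isClaw hp, colorSet_of_isClaw hy]
  rw [Sym2.eq_swap (a := y) (b := p)] at hsum ⊢
  exact ncard_triple_union_line (hφ.ne_zero p y hpy) (hφ.ne_zero p a hp.adj₂)
    (hφ.ne_zero p b hp.adj₃) (hφ.ne_zero y z hy.adj₂) (hφ.apply_ne_apply h hps hpt hp)
    (hφ.apply_ne_apply h hps hpt hp.swap₂₃) (hφ.apply_ne_apply h hps hpt hp.rotate)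
    (hφ.sum_eq y a b hp) hsum

theorem isPoorAt_or_isRichAt (hφ : IsDefectFlow G φ t p v) (h : IsPendantCubic G s t)
    (hps : p ≠ s) (hpt : p ≠ t) (hxy : G.Adj x y) (hxt : x ≠ t) (hyt : y ≠ t) :
    IsPoorAt G φ x y ∨ IsRichAt G φ x y := by
  obtain rfl | hxp := eq_or_ne x p
  · exact .inr (hφ.isRichAt h hps hpt hxy)
  obtain rfl | hyp := eq_or_ne y p
  · right
    rw [IsRichAt, Set.union_comm]
    exact hφ.isRichAt h hps hpt hxy.symm
  obtain ⟨a, b, hx⟩ := h.exists_isClaw hxt hxy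
  obtain ⟨c, d, hy⟩ := h.exists_isClaw hyt hxy.symm
  have hsum := hφ.isFlowAt y hyp hyt x c d hy
  rw [IsPoorAt, IsRichAt, colorSet_of_isClaw hx, colorSet_of_isClaw hy]
  rw [Sym2.eq_swap (a := y) (b := x)] at hsum ⊢
  exact ncard_line_union_line (hφ.ne_zero x y hxy) (hφ.ne_zero x a hx.adj₂) (hφ.ne_zero x b hx.adj₃)
    (hφ.ne_zero y c hy.adj₂) (hφ.ne_zero y d hy.adj₃) (hφ.isFlowAt x hxp hxt y a b hx) hsum

end IsDefectFlow

theorem exists_injOn_compl_zero : ∃ ι : (Fin 3 → ZMod 2) → Fin 7, Set.InjOn ι {0}ᶜ := by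
  have hcard : Fintype.card ({0}ᶜ : Set (Fin 3 → ZMod 2)) = 7 := by
    rw [Fintype.card_compl_set, Fintype.card_pi_const]
    simp [ZMod.card]
  let equiv := Fintype.equivFinOfCardEq hcard
  refine ⟨fun m => if hm : m ∈ ({0}ᶜ : Set (Fin 3 → ZMod 2)) then equiv ⟨m, hm⟩ else 0, ?_⟩
  intro m hm n hn hmn
  simp only [dif_pos hm, dif_pos hn] at hmn
  exact congrArg Subtype.val (equiv.injective hmn)

theorem IsPendantCubic.exists_coloring [Finite V] (h : IsPendantCubic G s t) :
    ∃ c : Sym2 V → Fin 7, IsProperEdgeColoring G c ∧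
      ∀ x y, G.Adj x y → s(x, y) ≠ s(s, t) → IsPoorAt G c x y ∨ IsRichAt G c x y := by
  obtain ⟨φ, p, v, hps, hpt, hφ⟩ := h.exists_isDefectFlow
  obtain ⟨ι, hι⟩ := exists_injOn_compl_zero
  have hιφ : Set.InjOn ι (φ '' G.edgeSet) := hι.mono <| by
    rintro _ ⟨⟨x, y⟩, hxy, rfl⟩
    exact hφ.ne_zero x y hxy
  refine ⟨ι ∘ φ, (hφ.isProperEdgeColoring h hps).comp hιφ, fun x y hxy hne => ?_⟩
  have hxt : x ≠ t := by
    rintro rfl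
    exact hne (by rw [(h.adj_iff y).1 hxy, Sym2.eq_swap])
  have hyt : y ≠ t := by
    rintro rfl
    exact hne (by rw [(h.adj_iff x).1 hxy.symm])
  rw [IsPoorAt, IsRichAt, ncard_colorSet_comp_union hιφ]
  exact hφ.isPoorAt_or_isRichAt h hps hpt hxy hxt hyt

end DefectFlow

section SubdividePendant

open scoped Classical

variable {V : Type*} {G : SimpleGraph V} {u w a b : V} {i j : Fin 2}

theorem subdividePendant_adj_inl_inl :
    (subdividePendant G u w).Adj (.inl a) (.inl b) ↔ G.Adj a b ∧ s(a, b) ≠ s(u, w) := by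
  have hmap : s(.inl a, .inl b) = Sym2.map (Sum.inl : V → V ⊕ Fin 2) s(a, b) := rfl
  rw [subdividePendant, fromEdgeSet_adj, Set.mem_union, hmap,
    (Sym2.map.injective Sum.inl_injective).mem_set_image]
  have := G.ne_of_adj (a := a) (b := b)
  simp only [Set.mem_sdiff, mem_edgeSet, Set.mem_insert_iff, Set.mem_singleton_iff, Sym2.map_mk,
    Sym2.eq_iff, Sum.inl.injEq, reduceCtorEq, ne_eq]
  tauto

theorem subdividePendant_adj_inl_inr :
    (subdividePendant G u w).Adj (.inl a) (.inr i) ↔ i = 0 ∧ (a = u ∨ a = w) := by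
  have hmap (e : Sym2 V) : Sym2.map (Sum.inl : V → V ⊕ Fin 2) e ≠ s(.inl a, .inr i) := by
    induction e; simp
  simp only [subdividePendant, fromEdgeSet_adj, Set.mem_union, Set.mem_image, hmap,
    Set.mem_insert_iff, Set.mem_singleton_iff, Sym2.eq_iff, Sum.inl.injEq, Sum.inr.injEq,
    reduceCtorEq]
  tauto

theorem subdividePendant_adj_inr_inr :
    (subdividePendant G u w).Adj (.inr i) (.inr j) ↔ i = 0 ∧ j = 1 ∨ i = 1 ∧ j = 0 := by
  have hmap (e : Sym2 V) : Sym2.map (Sum.inl : V → V ⊕ Fin 2) e ≠ s(.inr i, .inr j) := by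
    induction e; simp
  simp only [subdividePendant, fromEdgeSet_adj, Set.mem_union, Set.mem_image, hmap,
    Set.mem_insert_iff, Set.mem_singleton_iff, Sym2.eq_iff, Sum.inr.injEq, reduceCtorEq]
  grind

theorem isClaw_subdividePendant_inr_zero (huw : u ≠ w) :
    IsClaw (subdividePendant G u w) (.inr 0) (.inr 1) (.inl u) (.inl w) := by
  refine ⟨by simp, by simp, by simpa using huw, ?_⟩
  rintro (a | i)
  · rw [adj_comm, subdividePendant_adj_inl_inr]; simp
  · rw [subdividePendant_adj_inr_inr]; simp

theorem subdividePendant_adj_inr_one (y : V ⊕ Fin 2) :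
    (subdividePendant G u w).Adj (.inr 1) y ↔ y = .inr 0 := by
  obtain a | i := y
  · rw [adj_comm, subdividePendant_adj_inl_inr]; simp
  · rw [subdividePendant_adj_inr_inr]; simp

theorem neighborSet_subdividePendant_inl (huw : G.Adj u w) (a : V) :
    (subdividePendant G u w).neighborSet (.inl a) =
      (fun b => if s(a, b) = s(u, w) then .inr 0 else .inl b) '' G.neighborSet a := by
  ext (b | i)
  · simp only [mem_neighborSet, subdividePendant_adj_inl_inl, Set.mem_image]
    grind
  · simp only [mem_neighborSet, subdividePendant_adj_inl_inr, Set.mem_image]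
    grind [SimpleGraph.Adj.symm]

theorem ncard_neighborSet_subdividePendant_inl (huw : G.Adj u w) (a : V) :
    ((subdividePendant G u w).neighborSet (.inl a)).ncard = (G.neighborSet a).ncard := by
  rw [neighborSet_subdividePendant_inl huw]
  refine Set.InjOn.ncard_image fun b _ c _ hbc => ?_
  grind

theorem subdividePendant_comm (G : SimpleGraph V) (u w : V) :
    subdividePendant G u w = subdividePendant G w u := by
  rw [subdividePendant, subdividePendant, Sym2.eq_swap, Set.insert_comm]

theorem reachable_map_of_forall_adj {V' : Type*} {H : SimpleGraph V} {H' : SimpleGraph V'}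
    {f : V → V'} (hf : ∀ x y, H.Adj x y → H'.Reachable (f x) (f y)) (hab : H.Reachable a b) :
    H'.Reachable (f a) (f b) := by
  obtain ⟨walk⟩ := hab
  induction walk with
  | nil => exact .refl _
  | cons hadj _ ih => exact (hf _ _ hadj).trans ih

theorem not_isBridge_subdividePendant_inl_inl (h : ¬ G.IsBridge s(a, b)) :
    ¬ (subdividePendant G u w).IsBridge s(.inl a, .inl b) := by
  rw [isBridge_iff, not_not] at h ⊢
  have huw : ((subdividePendant G u w).deleteEdges {s(.inl a, .inl b)}).Reachable
      (.inl u) (.inl w) := by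
    refine Reachable.trans (v := .inr 0) (Adj.reachable ?_) (Adj.reachable ?_).symm <;>
      simp [subdividePendant_adj_inl_inr]
  refine reachable_map_of_forall_adj (fun x y hxy => ?_) h
  rw [deleteEdges_adj] at hxy
  by_cases hxyuw : s(x, y) = s(u, w)
  · obtain ⟨rfl, rfl⟩ | ⟨rfl, rfl⟩ := Sym2.eq_iff.1 hxyuw
    exacts [huw, huw.symm]
  · refine (deleteEdges_adj.2 ⟨subdividePendant_adj_inl_inl.2 ⟨hxy.1, hxyuw⟩, ?_⟩).reachable
    simpa using hxy.2

theorem not_isBridge_subdividePendant_inl_inr_zero (huw : G.Adj u w) (h : ¬ G.IsBridge s(u, w)) :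
    ¬ (subdividePendant G u w).IsBridge s(.inl u, .inr 0) := by
  rw [isBridge_iff, not_not] at h ⊢
  refine Reachable.trans (v := .inl w) ?_ (Adj.reachable ?_)
  · refine reachable_map_of_forall_adj (fun x y hxy => Adj.reachable ?_) h
    rw [deleteEdges_adj] at hxy
    exact deleteEdges_adj.2 ⟨subdividePendant_adj_inl_inl.2 hxy, by simp⟩
  · simp [subdividePendant_adj_inl_inr, huw.ne']

theorem Bridgeless.not_isBridge_subdividePendant (hbl : Bridgeless G) (huw : G.Adj u w)
    {x y : V ⊕ Fin 2} (hxy : (subdividePendant G u w).Adj x y)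
    (hne : s(x, y) ≠ s(.inr 0, .inr 1)) : ¬ (subdividePendant G u w).IsBridge s(x, y) := by
  have hinl {a : V} {i : Fin 2} (h : (subdividePendant G u w).Adj (.inl a) (.inr i)) :
      ¬ (subdividePendant G u w).IsBridge s(.inl a, .inr i) := by
    obtain ⟨rfl, rfl | rfl⟩ := subdividePendant_adj_inl_inr.1 h
    · exact not_isBridge_subdividePendant_inl_inr_zero huw (hbl _ huw)
    · rw [subdividePendant_comm]
      exact not_isBridge_subdividePendant_inl_inr_zero huw.symm (hbl _ huw.symm)
  match x, y with
  | .inl a, .inl b =>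
    exact not_isBridge_subdividePendant_inl_inl (hbl _ (subdividePendant_adj_inl_inl.1 hxy).1)
  | .inl a, .inr i => exact hinl hxy
  | .inr i, .inl a =>
    rw [Sym2.eq_swap]
    exact hinl hxy.symm
  | .inr i, .inr j =>
    obtain ⟨rfl, rfl⟩ | ⟨rfl, rfl⟩ := subdividePendant_adj_inr_inr.1 hxy
    exacts [absurd rfl hne, absurd Sym2.eq_swap hne]

theorem IsCubic.ncard_neighborSet_subdividePendant (hG : IsCubic G) (huw : G.Adj u w)
    {x : V ⊕ Fin 2} (hx : x ≠ .inr 1) :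
    ((subdividePendant G u w).neighborSet x).ncard = 3 := by
  obtain a | i := x
  · exact (ncard_neighborSet_subdividePendant_inl huw a).trans (hG a)
  · obtain rfl : i = 0 := by grind
    exact (isClaw_subdividePendant_inr_zero huw.ne).ncard_neighborSet

theorem isPendantCubic_subdividePendant (hG : IsCubic G) (hbl : Bridgeless G) (huw : G.Adj u w) :
    IsPendantCubic (subdividePendant G u w) (.inr 0) (.inr 1) where
  adj_iff := subdividePendant_adj_inr_one
  ncard_neighborSet _ hx := hG.ncard_neighborSet_subdividePendant huw hx
  not_isBridge := Sym2.ind fun _ _ hxy hne => hbl.not_isBridge_subdividePendant huw hxy hne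

end SubdividePendant

theorem stmt_13 {V : Type*} [Fintype V] (G : SimpleGraph V)
    (hG : IsCubic G) (hbl : Bridgeless G) (u w : V) (huw : G.Adj u w) :
    ∃ c : Sym2 (V ⊕ Fin 2) → Fin 7,
      IsProperEdgeColoring (subdividePendant G u w) c ∧
      ∀ x y : V ⊕ Fin 2, (subdividePendant G u w).Adj x y →
        s(x, y) ≠ s((Sum.inr 0 : V ⊕ Fin 2), (Sum.inr 1 : V ⊕ Fin 2)) →
        IsPoorAt (subdividePendant G u w) c x y ∨ IsRichAt (subdividePendant G u w) c x y :=
  (isPendantCubic_subdividePendant hG hbl huw).exists_coloring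
end
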